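/- Suppose ‖φ‖_{L∞(∂Ω)} ≤ 1. Then there exists a constant C > 0, depending only on Ω, μ, δ₀, κ⁺ and κ⁻ (in particular independent of δ and ε), such that sup_{x ∈ E} |∇u_ε(x)| ≤ C. -/

import Mathlib

open Set MeasureTheory

/-- Partial derivative in direction `i` of a function on `ℝ²`. -/
noncomputable def pd (i : Fin 2) (f : EuclideanSpace ℝ (Fin 2) → ℝ)
    (x : EuclideanSpace ℝ (Fin 2)) : ℝ :=
  fderiv ℝ f x (EuclideanSpace.single i 1)

/-- The center `(0, -2-2δ)` of the lower disk `B⁻`. -/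
noncomputable def ctr (δ : ℝ) : EuclideanSpace ℝ (Fin 2) :=
  (WithLp.equiv 2 (Fin 2 → ℝ)).symm ![0, -2 - 2 * δ]

/-- The upper unit disk `B⁺`, centered at the origin. -/
noncomputable def Bp : Set (EuclideanSpace ℝ (Fin 2)) := Metric.ball 0 1

/-- The lower unit disk `B⁻`, centered at `(0, -2-2δ)`. -/
noncomputable def Bm (δ : ℝ) : Set (EuclideanSpace ℝ (Fin 2)) := Metric.ball (ctr δ) 1

open Classical in
/-- The conductivity: `κ⁺` on `B⁺`, `κ⁻` on `B⁻`, and `1` elsewhere. -/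
noncomputable def aFun (δ κp κm : ℝ) (x : EuclideanSpace ℝ (Fin 2)) : ℝ :=
  if x ∈ Bp then κp else if x ∈ Bm δ then κm else 1

/-- `Ω^σ = {x ∈ Ω : dist(x, ∂Ω) ≥ σ}`. -/
noncomputable def innerReg (Ω : Set (EuclideanSpace ℝ (Fin 2))) (σ : ℝ) :
    Set (EuclideanSpace ℝ (Fin 2)) :=
  {x ∈ Ω | σ ≤ Metric.infDist x (frontier Ω)}

/-- `Ω` has smooth boundary: it is the sublevel set of a smooth function with
nonvanishing gradient on the boundary. -/
def SmoothBoundary (Ω : Set (EuclideanSpace ℝ (Fin 2))) : Prop :=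
  ∃ f : EuclideanSpace ℝ (Fin 2) → ℝ, ContDiff ℝ (⊤ : ℕ∞) f ∧ Ω = {x | f x < 0} ∧
    ∀ x ∈ frontier Ω, fderiv ℝ f x ≠ 0

/-- `‖φ‖_{L^∞(∂Ω)}`. -/
noncomputable def bdryNorm (Ω : Set (EuclideanSpace ℝ (Fin 2))) (φ : EuclideanSpace ℝ (Fin 2) → ℝ) : ℝ :=
  sSup ((fun y => |φ y|) '' frontier Ω)

/-- `W⁺ = {x ∈ Ω : dist(x, ∂B⁺) ≤ μ, x₂ ≥ -1-δ}`. -/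
noncomputable def Wp (Ω : Set (EuclideanSpace ℝ (Fin 2))) (δ μ : ℝ) :
    Set (EuclideanSpace ℝ (Fin 2)) :=
  {x ∈ Ω | Metric.infDist x (Metric.sphere (0 : EuclideanSpace ℝ (Fin 2)) 1) ≤ μ
    ∧ -1 - δ ≤ x 1}

/-- `W⁻ = {x ∈ Ω : dist(x, ∂B⁻) ≤ μ, x₂ ≤ -1-δ}`. -/
noncomputable def Wm (Ω : Set (EuclideanSpace ℝ (Fin 2))) (δ μ : ℝ) :
    Set (EuclideanSpace ℝ (Fin 2)) :=
  {x ∈ Ω | Metric.infDist x (Metric.sphere (ctr δ) 1) ≤ μ ∧ x 1 ≤ -1 - δ}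

/-- The horizontal segment `S = {(x₁, -1-δ) : -c ≤ x₁ ≤ c}`. -/
def Sseg (c δ : ℝ) : Set (EuclideanSpace ℝ (Fin 2)) :=
  {x | |x 0| ≤ c ∧ x 1 = -1 - δ}

/-- The thin rectangle `E = {(x₁,x₂) : -c ≤ x₁ ≤ c, |x₂+1+δ| ≤ δ/2}`. -/
def Eset (c δ : ℝ) : Set (EuclideanSpace ℝ (Fin 2)) :=
  {x | |x 0| ≤ c ∧ |x 1 + 1 + δ| ≤ δ / 2}


open scoped ContDiff


namespace Neck

/-- partial derivatives on `ℝ × ℝ` -/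
noncomputable def dX (F : ℝ × ℝ → ℝ) (z : ℝ × ℝ) : ℝ := fderiv ℝ F z (1, 0)
noncomputable def dY (F : ℝ × ℝ → ℝ) (z : ℝ × ℝ) : ℝ := fderiv ℝ F z (0, 1)

/-- smooth on the set `O` -/
def Sm (O : Set (ℝ × ℝ)) (F : ℝ × ℝ → ℝ) : Prop := ContDiffOn ℝ ∞ F O

variable {O : Set (ℝ × ℝ)} {F G : ℝ × ℝ → ℝ}

lemma Sm.dX (hF : Sm O F) (hO : IsOpen O) : Sm O (dX F) := by
  have h := hF.fderiv_of_isOpen (m := ∞) hO (by simp)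
  exact h.clm_apply contDiffOn_const

lemma Sm.dY (hF : Sm O F) (hO : IsOpen O) : Sm O (dY F) := by
  have h := hF.fderiv_of_isOpen (m := ∞) hO (by simp)
  exact h.clm_apply contDiffOn_const

lemma Sm.cont (hF : Sm O F) : ContinuousOn F O := ContDiffOn.continuousOn hF

lemma Sm.mul (hF : Sm O F) (hG : Sm O G) : Sm O (fun z => F z * G z) := ContDiffOn.mul hF hG
lemma Sm.add (hF : Sm O F) (hG : Sm O G) : Sm O (fun z => F z + G z) := ContDiffOn.add hF hG
lemma Sm.sub (hF : Sm O F) (hG : Sm O G) : Sm O (fun z => F z - G z) := ContDiffOn.sub hF hG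
lemma Sm.pow (hF : Sm O F) (n : ℕ) : Sm O (fun z => F z ^ n) := ContDiffOn.pow hF n
lemma sm_const (c : ℝ) : Sm O (fun _ => c) := contDiffOn_const
lemma sm_fst : Sm O (fun z => z.1) := contDiff_fst.contDiffOn
lemma sm_snd : Sm O (fun z => z.2) := contDiff_snd.contDiffOn

lemma Sm.hasF (hF : Sm O F) (hO : IsOpen O) {z : ℝ × ℝ} (hz : z ∈ O) :
    HasFDerivAt F (fderiv ℝ F z) z :=
  ((ContDiffOn.contDiffAt hF (hO.mem_nhds hz)).differentiableAt (by simp)).hasFDerivAt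

lemma Sm.hasX (hF : Sm O F) (hO : IsOpen O) {x y : ℝ} (hz : (x, y) ∈ O) :
    HasDerivAt (fun t => F (t, y)) (Neck.dX F (x, y)) x := by
  have h := hF.hasF hO hz
  have h2 : HasDerivAt (fun t : ℝ => (t, y)) ((1 : ℝ), (0 : ℝ)) x :=
    (hasDerivAt_id x).prodMk (hasDerivAt_const x y)
  exact h.comp_hasDerivAt x h2

lemma Sm.hasY (hF : Sm O F) (hO : IsOpen O) {x y : ℝ} (hz : (x, y) ∈ O) :
    HasDerivAt (fun t => F (x, t)) (Neck.dY F (x, y)) y := by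
  have h := hF.hasF hO hz
  have h2 : HasDerivAt (fun t : ℝ => (x, t)) ((0 : ℝ), (1 : ℝ)) y :=
    (hasDerivAt_const y x).prodMk (hasDerivAt_id y)
  exact h.comp_hasDerivAt y h2

lemma Sm.comm (hF : Sm O F) (hO : IsOpen O) {z : ℝ × ℝ} (hz : z ∈ O) :
    Neck.dX (Neck.dY F) z = Neck.dY (Neck.dX F) z := by
  have hs : IsSymmSndFDerivAt ℝ F z :=
    (ContDiffOn.contDiffAt hF (hO.mem_nhds hz)).isSymmSndFDerivAt
      (by simp only [minSmoothness_of_isRCLikeNormedField]; exact WithTop.coe_le_coe.2 (le_top : (2 : ℕ∞) ≤ ⊤))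
  have h1 := hF.fderiv_of_isOpen (m := ∞) hO (by simp)
  have hd : DifferentiableAt ℝ (fderiv ℝ F) z :=
    (h1.contDiffAt (hO.mem_nhds hz)).differentiableAt (by simp)
  have e1 : ∀ v w : ℝ × ℝ, fderiv ℝ (fun z => fderiv ℝ F z v) z w
      = fderiv ℝ (fderiv ℝ F) z w v := by
    intro v w
    rw [fderiv_clm_apply hd (differentiableAt_const _)]
    simp
  have := hs (1, 0) (0, 1)
  unfold Neck.dX Neck.dY
  rw [e1, e1, this]

lemma dX_congr (hO : IsOpen O) (h : ∀ z ∈ O, F z = G z) {z : ℝ × ℝ} (hz : z ∈ O) :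
    dX F z = dX G z := by
  unfold dX
  rw [Filter.EventuallyEq.fderiv_eq]
  filter_upwards [hO.mem_nhds hz] with w hw using h w hw

lemma dY_congr (hO : IsOpen O) (h : ∀ z ∈ O, F z = G z) {z : ℝ × ℝ} (hz : z ∈ O) :
    dY F z = dY G z := by
  unfold dY
  rw [Filter.EventuallyEq.fderiv_eq]
  filter_upwards [hO.mem_nhds hz] with w hw using h w hw

lemma dX_mul (hF : Sm O F) (hG : Sm O G) (hO : IsOpen O) {z : ℝ × ℝ} (hz : z ∈ O) :
    dX (fun z => F z * G z) z = dX F z * G z + F z * dX G z := by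
  obtain ⟨x, y⟩ := z
  exact ((hF.mul hG).hasX hO hz).unique ((hF.hasX hO hz).mul (hG.hasX hO hz))
lemma dY_mul (hF : Sm O F) (hG : Sm O G) (hO : IsOpen O) {z : ℝ × ℝ} (hz : z ∈ O) :
    dY (fun z => F z * G z) z = dY F z * G z + F z * dY G z := by
  obtain ⟨x, y⟩ := z
  exact ((hF.mul hG).hasY hO hz).unique ((hF.hasY hO hz).mul (hG.hasY hO hz))
lemma dX_add (hF : Sm O F) (hG : Sm O G) (hO : IsOpen O) {z : ℝ × ℝ} (hz : z ∈ O) :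
    dX (fun z => F z + G z) z = dX F z + dX G z := by
  obtain ⟨x, y⟩ := z
  exact ((hF.add hG).hasX hO hz).unique ((hF.hasX hO hz).add (hG.hasX hO hz))
lemma dY_add (hF : Sm O F) (hG : Sm O G) (hO : IsOpen O) {z : ℝ × ℝ} (hz : z ∈ O) :
    dY (fun z => F z + G z) z = dY F z + dY G z := by
  obtain ⟨x, y⟩ := z
  exact ((hF.add hG).hasY hO hz).unique ((hF.hasY hO hz).add (hG.hasY hO hz))
lemma dX_sub (hF : Sm O F) (hG : Sm O G) (hO : IsOpen O) {z : ℝ × ℝ} (hz : z ∈ O) :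
    dX (fun z => F z - G z) z = dX F z - dX G z := by
  obtain ⟨x, y⟩ := z
  exact ((hF.sub hG).hasX hO hz).unique ((hF.hasX hO hz).sub (hG.hasX hO hz))
lemma dY_sub (hF : Sm O F) (hG : Sm O G) (hO : IsOpen O) {z : ℝ × ℝ} (hz : z ∈ O) :
    dY (fun z => F z - G z) z = dY F z - dY G z := by
  obtain ⟨x, y⟩ := z
  exact ((hF.sub hG).hasY hO hz).unique ((hF.hasY hO hz).sub (hG.hasY hO hz))
lemma dX_pow (hF : Sm O F) (n : ℕ) (hO : IsOpen O) {z : ℝ × ℝ} (hz : z ∈ O) :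
    dX (fun z => F z ^ n) z = n * F z ^ (n - 1) * dX F z := by
  obtain ⟨x, y⟩ := z
  exact ((hF.pow n).hasX hO hz).unique ((hF.hasX hO hz).pow n)
lemma dY_pow (hF : Sm O F) (n : ℕ) (hO : IsOpen O) {z : ℝ × ℝ} (hz : z ∈ O) :
    dY (fun z => F z ^ n) z = n * F z ^ (n - 1) * dY F z := by
  obtain ⟨x, y⟩ := z
  exact ((hF.pow n).hasY hO hz).unique ((hF.hasY hO hz).pow n)
lemma dX_fst (z : ℝ × ℝ) : dX (fun z => z.1) z = 1 := by
  unfold dX; rw [fderiv_fst]; simp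
lemma dY_fst (z : ℝ × ℝ) : dY (fun z => z.1) z = 0 := by
  unfold dY; rw [fderiv_fst]; simp
lemma dX_snd (z : ℝ × ℝ) : dX (fun z => z.2) z = 0 := by
  unfold dX; rw [fderiv_snd]; simp
lemma dY_snd (z : ℝ × ℝ) : dY (fun z => z.2) z = 1 := by
  unfold dY; rw [fderiv_snd]; simp
lemma dX_const (c : ℝ) (z : ℝ × ℝ) : dX (fun _ => c) z = 0 := by
  unfold dX; simp
lemma dY_const (c : ℝ) (z : ℝ × ℝ) : dY (fun _ => c) z = 0 := by
  unfold dY; simp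

lemma div_box (hO : IsOpen O) (hF : Sm O F) (hG : Sm O G) {A B c d : ℝ} (hAB : A ≤ B)
    (hcd : c ≤ d) (hsub : Icc (A, c) (B, d) ⊆ O) :
    ∫ z in Icc (A, c) (B, d), (dX F z + dY G z) =
      (((∫ x in A..B, G (x, d)) - ∫ x in A..B, G (x, c)) + ∫ y in c..d, F (B, y))
        - ∫ y in c..d, F (A, y) := by
  have hmem : ∀ x ∈ Ioo A B ×ˢ Ioo c d, x ∈ O := by
    rintro ⟨x, y⟩ ⟨h1, h2⟩
    exact hsub ⟨⟨h1.1.le, h2.1.le⟩, ⟨h1.2.le, h2.2.le⟩⟩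
  have := integral_divergence_prod_Icc_of_hasFDerivAt_of_le F G (fderiv ℝ F) (fderiv ℝ G)
    (A, c) (B, d) ⟨hAB, hcd⟩ (hF.cont.mono hsub) (hG.cont.mono hsub)
    (fun x hx => hF.hasF hO (hmem x hx)) (fun x hx => hG.hasF hO (hmem x hx))
    ((((hF.dX hO).add (hG.dY hO)).cont.mono hsub).integrableOn_compact isCompact_Icc)
  exact this

lemma Sm.intOn (hF : Sm O F) {p q : ℝ × ℝ} (hsub : Icc p q ⊆ O) : IntegrableOn F (Icc p q) :=
  (hF.cont.mono hsub).integrableOn_compact isCompact_Icc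

lemma int_mono (hF : Sm O F) (hG : Sm O G) {p q : ℝ × ℝ} (hsub : Icc p q ⊆ O)
    (h : ∀ z ∈ Icc p q, F z ≤ G z) : ∫ z in Icc p q, F z ≤ ∫ z in Icc p q, G z :=
  setIntegral_mono_on (hF.intOn hsub) (hG.intOn hsub) measurableSet_Icc h

lemma int_nonneg {p q : ℝ × ℝ} (h : ∀ z ∈ Icc p q, 0 ≤ F z) : 0 ≤ ∫ z in Icc p q, F z :=
  setIntegral_nonneg measurableSet_Icc h

lemma int_mono_set (hF : Sm O F) {p q p' q' : ℝ × ℝ} (hsub : Icc p q ⊆ O)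
    (hs : Icc p' q' ⊆ Icc p q)
    (h : ∀ z ∈ Icc p q, 0 ≤ F z) : ∫ z in Icc p' q', F z ≤ ∫ z in Icc p q, F z := by
  apply setIntegral_mono_set (hF.intOn hsub)
  · exact (ae_restrict_iff' measurableSet_Icc).2 (Filter.Eventually.of_forall h)
  · exact Filter.Eventually.of_forall hs

/-- continuity on horizontal lines -/
lemma Sm.line (hF : Sm O F) {A B y : ℝ} (h : ∀ x ∈ Icc A B, (x, y) ∈ O) :
    ContinuousOn (fun x => F (x, y)) (Icc A B) :=
  hF.cont.comp (by fun_prop) h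

lemma Sm.lineInt (hF : Sm O F) {A B y : ℝ} (hAB : A ≤ B) (h : ∀ x ∈ Icc A B, (x, y) ∈ O) :
    IntervalIntegrable (fun x => F (x, y)) volume A B := by
  apply ContinuousOn.intervalIntegrable
  rw [uIcc_of_le hAB]; exact hF.line h

end Neck

namespace Neck

structure Sol (O : Set (ℝ × ℝ)) (a u : ℝ × ℝ → ℝ) (Λ : ℝ) : Prop where
  hO : IsOpen O
  ha : Sm O a
  hu : Sm O u
  pde : ∀ z ∈ O, a z * (dX (dX u) z + dY (dY u) z) + (dX a z * dX u z + dY a z * dY u z) = 0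
  lo : ∀ z ∈ O, 1 ≤ Λ * a z
  hi : ∀ z ∈ O, a z ≤ Λ
  hΛ : 1 ≤ Λ

/-- cutoff -/
def zt (t b : ℝ) (z : ℝ × ℝ) : ℝ := (b ^ 2 - (z.1 - t) ^ 2) * (b ^ 2 - z.2 ^ 2)

lemma zt_sm {O : Set (ℝ × ℝ)} (t b : ℝ) : Sm O (zt t b) := by
  have : ContDiff ℝ ∞ (zt t b) := by unfold zt; fun_prop
  exact this.contDiffOn

lemma dX_zt (t b : ℝ) (z : ℝ × ℝ) : dX (zt t b) z = -2 * (z.1 - t) * (b ^ 2 - z.2 ^ 2) := by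
  obtain ⟨x, y⟩ := z
  have h := (zt_sm (O := univ) t b).hasX isOpen_univ (mem_univ (x, y))
  have h2 : HasDerivAt (fun s => (b ^ 2 - (s - t) ^ 2) * (b ^ 2 - y ^ 2))
      (-2 * (x - t) * (b ^ 2 - y ^ 2)) x := by
    have := ((((hasDerivAt_id x).sub_const t).pow 2).const_sub (b ^ 2)).mul_const (b ^ 2 - y ^ 2)
    refine this.congr_deriv ?_
    simp [id]
  exact h.unique h2

lemma dY_zt (t b : ℝ) (z : ℝ × ℝ) : dY (zt t b) z = -2 * z.2 * (b ^ 2 - (z.1 - t) ^ 2) := by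
  obtain ⟨x, y⟩ := z
  have h := (zt_sm (O := univ) t b).hasY isOpen_univ (mem_univ (x, y))
  have h2 : HasDerivAt (fun s => (b ^ 2 - (x - t) ^ 2) * (b ^ 2 - s ^ 2))
      (-2 * y * (b ^ 2 - (x - t) ^ 2)) y := by
    have := (((hasDerivAt_id y).pow 2).const_sub (b ^ 2)).const_mul (b ^ 2 - (x - t) ^ 2)
    refine this.congr_deriv ?_
    simp [id]; ring
  exact h.unique h2

lemma zt_bounds {t b : ℝ} (hb0 : 0 < b) (hb1 : b ≤ 1) {z : ℝ × ℝ}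
    (hz : z ∈ Icc (t - b, -b) (t + b, b)) :
    0 ≤ zt t b z ∧ zt t b z ≤ 1 ∧ |dX (zt t b) z| ≤ 2 ∧ |dY (zt t b) z| ≤ 2 := by
  obtain ⟨x, y⟩ := z
  obtain ⟨⟨h1, h2⟩, ⟨h3, h4⟩⟩ := hz
  simp only at h1 h2 h3 h4
  have hx : |x - t| ≤ b := abs_le.2 ⟨by linarith, by linarith⟩
  have hy : |y| ≤ b := abs_le.2 ⟨by linarith, by linarith⟩
  have hx2 : (x - t) ^ 2 ≤ b ^ 2 := sq_le_sq' (by linarith) (by linarith)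
  have hy2 : y ^ 2 ≤ b ^ 2 := sq_le_sq' (by linarith) (by linarith)
  have hb2 : b ^ 2 ≤ 1 := by nlinarith
  have p1 : 0 ≤ b ^ 2 - (x - t) ^ 2 := by linarith
  have p2 : 0 ≤ b ^ 2 - y ^ 2 := by linarith
  have q1 : b ^ 2 - (x - t) ^ 2 ≤ 1 := by nlinarith [sq_nonneg (x - t)]
  have q2 : b ^ 2 - y ^ 2 ≤ 1 := by nlinarith [sq_nonneg y]
  rw [dX_zt, dY_zt]
  refine ⟨mul_nonneg p1 p2, ?_, ?_, ?_⟩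
  · show (b ^ 2 - (x - t) ^ 2) * (b ^ 2 - y ^ 2) ≤ 1
    nlinarith
  · simp only [abs_mul, abs_neg, abs_two, abs_of_nonneg p2]
    have := abs_nonneg (x - t)
    nlinarith [mul_le_mul (hx.trans hb1) q2 p2 zero_le_one]
  · simp only [abs_mul, abs_neg, abs_two, abs_of_nonneg p1]
    nlinarith [mul_le_mul (hy.trans hb1) q1 p1 zero_le_one]

lemma zt_left (t b y : ℝ) : zt t b (t - b, y) = 0 := by unfold zt; ring
lemma zt_right (t b y : ℝ) : zt t b (t + b, y) = 0 := by unfold zt; ring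
lemma zt_top (t b x : ℝ) : zt t b (x, b) = 0 := by unfold zt; ring
lemma zt_bot (t b x : ℝ) : zt t b (x, -b) = 0 := by unfold zt; ring

variable {O : Set (ℝ × ℝ)} {a u : ℝ × ℝ → ℝ} {Λ : ℝ}

lemma Sol.apos (h : Sol O a u Λ) {z : ℝ × ℝ} (hz : z ∈ O) : 0 < a z := by
  have := h.lo z hz
  have := h.hΛ
  by_contra hc
  push Not at hc
  nlinarith

lemma energy_alg {k : ℕ} {ζ ζx ζy p q v A Λ L : ℝ} (zx : |ζx| ≤ 2) (zy : |ζy| ≤ 2)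
    (alo : L ≤ A) (ahi : A ≤ Λ) (ap : 0 < A) :
    L / 2 * (ζ ^ 2 * (p ^ 2 + q ^ 2)) - 4 * ((k : ℝ) + 2) ^ 2 * Λ * v ^ 2 ≤
      A * (ζ ^ 2 * (p ^ 2 + q ^ 2) + (k + 2) * ζ * v * (ζx * p + ζy * q)) := by
  have zx2 : ζx ^ 2 ≤ 4 := by nlinarith [abs_le.1 zx]
  have zy2 : ζy ^ 2 ≤ 4 := by nlinarith [abs_le.1 zy]
  have c1 : (1 / 2 : ℝ) * (ζ ^ 2 * (p ^ 2 + q ^ 2)) - 4 * ((k : ℝ) + 2) ^ 2 * v ^ 2 ≤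
      ζ ^ 2 * (p ^ 2 + q ^ 2) + (k + 2) * ζ * v * (ζx * p + ζy * q) := by
    have s1 := sq_nonneg (ζ * p + (k + 2) * v * ζx)
    have s2 := sq_nonneg (ζ * q + (k + 2) * v * ζy)
    have s3 : (((k : ℝ) + 2) * v) ^ 2 * (ζx ^ 2 + ζy ^ 2) ≤ (((k : ℝ) + 2) * v) ^ 2 * 8 :=
      mul_le_mul_of_nonneg_left (by linarith) (sq_nonneg _)
    linear_combination s1 / 2 + s2 / 2 + s3 / 2
  have n1 : 0 ≤ ζ ^ 2 * (p ^ 2 + q ^ 2) := by positivity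
  have n2 : 0 ≤ ((k : ℝ) + 2) ^ 2 * v ^ 2 := by positivity
  have c2 := mul_le_mul_of_nonneg_left c1 ap.le
  have c3 := mul_le_mul_of_nonneg_right alo n1
  have c4 := mul_le_mul_of_nonneg_right ahi n2
  linear_combination c2 + c3 / 2 + 4 * c4

/-- weighted Caccioppoli inequality with boundary term -/
lemma Sol.energy (h : Sol O a u Λ) {t b c : ℝ} (hb0 : 0 < b) (hb1 : b ≤ 1) (hc0 : -b ≤ c)
    (hcb : c ≤ b) (hsub : Icc (t - b, c) (t + b, b) ⊆ O) (k : ℕ) :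
    ∫ z in Icc (t - b, c) (t + b, b), zt t b z ^ (k + 2) * (dX u z ^ 2 + dY u z ^ 2) ≤
      -(2 * Λ) * (∫ x in (t - b)..(t + b),
        zt t b (x, c) ^ (k + 2) * (u (x, c) * (a (x, c) * dY u (x, c))))
      + 8 * (k + 2) ^ 2 * Λ ^ 2 * ∫ z in Icc (t - b, c) (t + b, b), zt t b z ^ k * u z ^ 2 := by
  have hO := h.hO
  have hz := zt_sm (O := O) t b
  have ux := h.hu.dX hO
  have uy := h.hu.dY hO
  have hF := (hz.pow (k + 2)).mul (h.hu.mul (h.ha.mul ux))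
  have hG := (hz.pow (k + 2)).mul (h.hu.mul (h.ha.mul uy))
  have hdiv := div_box hO hF hG (A := t - b) (B := t + b) (c := c) (d := b) (by linarith) hcb hsub
  have e0 : (0 : ℝ) ^ (k + 2) = 0 := by simp
  simp only [zt_left, zt_right, zt_top, e0, zero_mul, intervalIntegral.integral_zero] at hdiv
  set I := ∫ x in (t - b)..(t + b),
        zt t b (x, c) ^ (k + 2) * (u (x, c) * (a (x, c) * dY u (x, c))) with hI
  have hle : Λ⁻¹ / 2 * (∫ z in Icc (t - b, c) (t + b, b),
        zt t b z ^ (k + 2) * (dX u z ^ 2 + dY u z ^ 2))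
      - 4 * (k + 2) ^ 2 * Λ * (∫ z in Icc (t - b, c) (t + b, b), zt t b z ^ k * u z ^ 2) ≤ -I := by
    have e : -I = 0 - I + 0 - 0 := by ring
    rw [e, ← hdiv, ← integral_const_mul, ← integral_const_mul, ← integral_sub]
    · apply int_mono (O := O)
        (((sm_const _).mul ((hz.pow _).mul ((ux.pow 2).add (uy.pow 2)))).sub
          ((sm_const _).mul ((hz.pow k).mul (h.hu.pow 2)))) ((hF.dX hO).add (hG.dY hO)) hsub
      intro z hzI
      have hzO := hsub hzI
      have hzb : z ∈ Icc (t - b, -b) (t + b, b) :=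
        ⟨⟨hzI.1.1, hc0.trans hzI.1.2⟩, hzI.2⟩
      obtain ⟨z0, z1, zx, zy⟩ := zt_bounds hb0 hb1 hzb
      have e1 := dX_mul (hz.pow (k + 2)) (h.hu.mul (h.ha.mul ux)) hO hzO
      have e2 := dX_mul h.hu (h.ha.mul ux) hO hzO
      have e3 := dX_mul h.ha ux hO hzO
      have e4 := dX_pow hz (k + 2) hO hzO
      have e1' := dY_mul (hz.pow (k + 2)) (h.hu.mul (h.ha.mul uy)) hO hzO
      have e2' := dY_mul h.hu (h.ha.mul uy) hO hzO
      have e3' := dY_mul h.ha uy hO hzO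
      have e4' := dY_pow hz (k + 2) hO hzO
      rw [e1, e2, e3, e4, e1', e2', e3', e4']
      have hp := h.pde z hzO
      have ap := h.apos hzO
      have alo : Λ⁻¹ ≤ a z := by
        rw [inv_le_iff_one_le_mul₀ (by linarith [h.hΛ])]
        linarith [h.lo z hzO]
      have ahi := h.hi z hzO
      have hΛ := h.hΛ
      set ζ := zt t b z
      set p := dX u z
      set q := dY u z
      set ζx := dX (zt t b) z
      set ζy := dY (zt t b) z
      have hk : k + 2 - 1 = k + 1 := by omega
      rw [hk]
      have key : ((k + 2 : ℕ) * ζ ^ (k + 1) * ζx * (u z * (a z * p)) +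
          ζ ^ (k + 2) * (p * (a z * p) + u z * (dX a z * p + a z * dX (dX u) z))) +
          ((k + 2 : ℕ) * ζ ^ (k + 1) * ζy * (u z * (a z * q)) +
          ζ ^ (k + 2) * (q * (a z * q) + u z * (dY a z * q + a z * dY (dY u) z)))
          = ζ ^ k * (a z * (ζ ^ 2 * (p ^ 2 + q ^ 2) + (k + 2) * ζ * u z * (ζx * p + ζy * q))) := by
        push_cast
        linear_combination (ζ ^ (k + 2) * u z) * hp
      rw [key]
      have key2 : Λ⁻¹ / 2 * (ζ ^ (k + 2) * (p ^ 2 + q ^ 2)) - 4 * (k + 2) ^ 2 * Λ * (ζ ^ k * u z ^ 2)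
          = ζ ^ k * (Λ⁻¹ / 2 * (ζ ^ 2 * (p ^ 2 + q ^ 2)) - 4 * (k + 2) ^ 2 * Λ * u z ^ 2) := by
        ring
      rw [key2]
      apply mul_le_mul_of_nonneg_left _ (pow_nonneg z0 k)
      exact energy_alg (k := k) zx zy alo ahi ap
    · exact ((sm_const _).mul ((hz.pow _).mul ((ux.pow 2).add (uy.pow 2)))).intOn hsub
    · exact ((sm_const _).mul ((hz.pow k).mul (h.hu.pow 2))).intOn hsub
  have hΛ : 0 < Λ := by linarith [h.hΛ]
  set J := ∫ z in Icc (t - b, c) (t + b, b), zt t b z ^ (k + 2) * (dX u z ^ 2 + dY u z ^ 2)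
  set K := ∫ z in Icc (t - b, c) (t + b, b), zt t b z ^ k * u z ^ 2
  have := mul_le_mul_of_nonneg_left hle (show 0 ≤ 2 * Λ by linarith)
  have e : 2 * Λ * (Λ⁻¹ / 2 * J - 4 * (k + 2) ^ 2 * Λ * K) = J - 8 * (k + 2) ^ 2 * Λ ^ 2 * K := by
    field_simp
    ring
  rw [e] at this
  linarith

end Neck

namespace Neck

/-- coefficient radial about `(0, R)` on `O` -/
structure Half (O : Set (ℝ × ℝ)) (a u : ℝ × ℝ → ℝ) (Λ R : ℝ) : Prop extends Sol O a u Λ where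
  rad : ∀ z ∈ O, z.1 * dY a z = (z.2 - R) * dX a z

noncomputable def Xop (R : ℝ) (u : ℝ × ℝ → ℝ) (z : ℝ × ℝ) : ℝ :=
  z.1 * dY u z - (z.2 - R) * dX u z
noncomputable def Cj (R : ℝ) (a u : ℝ × ℝ → ℝ) (z : ℝ × ℝ) : ℝ :=
  a z * (z.1 * dX u z + (z.2 - R) * dY u z)

variable {O : Set (ℝ × ℝ)} {a u : ℝ × ℝ → ℝ} {Λ R : ℝ}

lemma Sm.Xop (hu : Sm O u) (hO : IsOpen O) (R : ℝ) : Sm O (Xop R u) :=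
  (sm_fst.mul (hu.dY hO)).sub ((sm_snd.sub (sm_const R)).mul (hu.dX hO))

lemma Sm.Cj (ha : Sm O a) (hu : Sm O u) (hO : IsOpen O) (R : ℝ) : Sm O (Cj R a u) :=
  ha.mul ((sm_fst.mul (hu.dX hO)).add ((sm_snd.sub (sm_const R)).mul (hu.dY hO)))

lemma dX_Xop (hu : Sm O u) (hO : IsOpen O) {z : ℝ × ℝ} (hz : z ∈ O) :
    dX (Xop R u) z = dY u z + z.1 * dX (dY u) z - (z.2 - R) * dX (dX u) z := by
  have ux := hu.dX hO
  have uy := hu.dY hO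
  have s := (sm_snd (O := O)).sub (sm_const R)
  show dX (fun z => z.1 * dY u z - (z.2 - R) * dX u z) z = _
  rw [dX_sub (sm_fst.mul uy) (s.mul ux) hO hz, dX_mul sm_fst uy hO hz, dX_mul s ux hO hz,
    dX_sub sm_snd (sm_const R) hO hz, dX_fst, dX_snd, dX_const]
  ring

lemma dY_Xop (hu : Sm O u) (hO : IsOpen O) {z : ℝ × ℝ} (hz : z ∈ O) :
    dY (Xop R u) z = z.1 * dY (dY u) z - dX u z - (z.2 - R) * dX (dY u) z := by
  have ux := hu.dX hO
  have uy := hu.dY hO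
  have s := (sm_snd (O := O)).sub (sm_const R)
  show dY (fun z => z.1 * dY u z - (z.2 - R) * dX u z) z = _
  rw [dY_sub (sm_fst.mul uy) (s.mul ux) hO hz, dY_mul sm_fst uy hO hz, dY_mul s ux hO hz,
    dY_sub sm_snd (sm_const R) hO hz, dY_fst, dY_snd, dY_const, hu.comm hO hz]
  ring

lemma Half.crx (h : Half O a u Λ R) {z : ℝ × ℝ} (hz : z ∈ O) :
    dX (Cj R a u) z = - (a z * dY (Xop R u) z) := by
  have hO := h.hO
  have ux := h.hu.dX hO
  have uy := h.hu.dY hO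
  have s := (sm_snd (O := O)).sub (sm_const R)
  rw [dY_Xop h.hu hO hz]
  show dX (fun z => a z * (z.1 * dX u z + (z.2 - R) * dY u z)) z = _
  rw [dX_mul h.ha ((sm_fst.mul ux).add (s.mul uy)) hO hz, dX_add (sm_fst.mul ux) (s.mul uy) hO hz,
    dX_mul sm_fst ux hO hz, dX_mul s uy hO hz,
    dX_sub sm_snd (sm_const R) hO hz, dX_fst, dX_snd, dX_const]
  linear_combination z.1 * h.pde z hz - dY u z * h.rad z hz

lemma Half.cry (h : Half O a u Λ R) {z : ℝ × ℝ} (hz : z ∈ O) :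
    dY (Cj R a u) z = a z * dX (Xop R u) z := by
  have hO := h.hO
  have ux := h.hu.dX hO
  have uy := h.hu.dY hO
  have s := (sm_snd (O := O)).sub (sm_const R)
  rw [dX_Xop h.hu hO hz]
  show dY (fun z => a z * (z.1 * dX u z + (z.2 - R) * dY u z)) z = _
  rw [dY_mul h.ha ((sm_fst.mul ux).add (s.mul uy)) hO hz, dY_add (sm_fst.mul ux) (s.mul uy) hO hz,
    dY_mul sm_fst ux hO hz, dY_mul s uy hO hz,
    dY_sub sm_snd (sm_const R) hO hz, dY_fst, dY_snd, dY_const, ← h.hu.comm hO hz]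
  linear_combination (z.2 - R) * h.pde z hz + dX u z * h.rad z hz

lemma Half.next (h : Half O a u Λ R) : Half O a (Xop R u) Λ R := by
  have hO := h.hO
  have hw := h.hu.Xop hO R
  have hf := h.ha.Cj h.hu hO R
  refine ⟨⟨hO, h.ha, hw, ?_, h.lo, h.hi, h.hΛ⟩, h.rad⟩
  intro z hz
  have c := hf.comm hO hz
  have e1 : dX (dY (Cj R a u)) z = dX (fun z => a z * dX (Xop R u) z) z :=
    dX_congr hO (fun z hz => h.cry hz) hz
  have e2 : dY (dX (Cj R a u)) z = dY (fun z => (-1) * (a z * dY (Xop R u) z)) z :=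
    dY_congr hO (fun z hz => by rw [h.crx hz]; ring) hz
  rw [e1, e2, dX_mul h.ha (hw.dX hO) hO hz,
    dY_mul (sm_const (-1)) (h.ha.mul (hw.dY hO)) hO hz, dY_const,
    dY_mul h.ha (hw.dY hO) hO hz] at c
  linear_combination c

lemma trace_alg {k : ℕ} {ζ ζy w f wx wy A Λ θ x y p q : ℝ} (z0 : 0 ≤ ζ) (zy : |ζy| ≤ 2)
    (ap : 0 < A) (ahi : A ≤ Λ) (hΛ : 1 ≤ Λ) (hθ : 0 < θ) (hθ1 : θ ≤ 1)
    (hw : w = x * q - y * p) (hf : f = A * (x * p + y * q)) (hx : |x| ≤ 3) (hy : |y| ≤ 2) :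
    -(((k : ℝ) + 1) * ζ ^ k * ζy * (w ^ 2 + f ^ 2) + ζ ^ (k + 1) *
      (2 * w * wy + 2 * f * (A * wx))) ≤
    13 * Λ ^ 2 * (2 * k + 2 + Λ ^ 2) / θ * (ζ ^ k * (p ^ 2 + q ^ 2)) +
      θ * (ζ ^ (k + 2) * (wx ^ 2 + wy ^ 2)) := by
  have hA2 : A ^ 2 ≤ Λ ^ 2 := by nlinarith
  have hΛ2 : 1 ≤ Λ ^ 2 := by nlinarith
  have hx2 : x ^ 2 ≤ 9 := by nlinarith [abs_le.1 hx]
  have hy2 : y ^ 2 ≤ 4 := by nlinarith [abs_le.1 hy]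
  have S : w ^ 2 + f ^ 2 ≤ 13 * Λ ^ 2 * (p ^ 2 + q ^ 2) := by
    have h1 : w ^ 2 + f ^ 2 ≤ Λ ^ 2 * ((x ^ 2 + y ^ 2) * (p ^ 2 + q ^ 2)) := by
      have e : w ^ 2 + f ^ 2 = (x * q - y * p) ^ 2 + A ^ 2 * (x * p + y * q) ^ 2 := by
        rw [hw, hf]; ring
      have i1 := mul_le_mul_of_nonneg_right hA2 (sq_nonneg (x * p + y * q))
      have i2 := mul_le_mul_of_nonneg_right hΛ2 (sq_nonneg (x * q - y * p))
      rw [e]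
      linear_combination i1 + i2
    have h2 : (x ^ 2 + y ^ 2) * (p ^ 2 + q ^ 2) ≤ 13 * (p ^ 2 + q ^ 2) :=
      mul_le_mul_of_nonneg_right (by linarith) (by positivity)
    have h3 := mul_le_mul_of_nonneg_left h2 (sq_nonneg Λ)
    linarith
  have c1 : -ζy * (w ^ 2 + f ^ 2) ≤ 2 * (w ^ 2 + f ^ 2) :=
    mul_le_mul_of_nonneg_right (by linarith [(abs_le.1 zy).1]) (by positivity)
  have c2 : -(ζ * (2 * w * wy)) ≤ w ^ 2 / θ + θ * ζ ^ 2 * wy ^ 2 := by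
    have : 0 ≤ (w + θ * ζ * wy) ^ 2 / θ := by positivity
    have e : (w + θ * ζ * wy) ^ 2 / θ = w ^ 2 / θ + 2 * w * ζ * wy + θ * ζ ^ 2 * wy ^ 2 := by
      field_simp; ring
    rw [e] at this; linarith
  have c3 : -(ζ * (2 * f * (A * wx))) ≤ Λ ^ 2 * f ^ 2 / θ + θ * ζ ^ 2 * wx ^ 2 := by
    have : 0 ≤ (A * f + θ * ζ * wx) ^ 2 / θ := by positivity
    have e : (A * f + θ * ζ * wx) ^ 2 / θ
        = A ^ 2 * f ^ 2 / θ + 2 * (A * f) * ζ * wx + θ * ζ ^ 2 * wx ^ 2 := by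
      field_simp; ring
    rw [e] at this
    have : A ^ 2 * f ^ 2 / θ ≤ Λ ^ 2 * f ^ 2 / θ := by gcongr
    linarith
  have c4 : w ^ 2 / θ ≤ Λ ^ 2 * w ^ 2 / θ := by
    gcongr
    nlinarith [sq_nonneg w]
  have c5 : w ^ 2 + f ^ 2 ≤ (w ^ 2 + f ^ 2) / θ := by
    rw [le_div_iff₀ hθ]
    nlinarith [add_nonneg (sq_nonneg w) (sq_nonneg f)]
  have tot : -(((k : ℝ) + 1) * ζy * (w ^ 2 + f ^ 2) + ζ *
      (2 * w * wy + 2 * f * (A * wx))) ≤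
      (2 * k + 2 + Λ ^ 2) / θ * (13 * Λ ^ 2 * (p ^ 2 + q ^ 2)) + θ * (ζ ^ 2 * (wx ^ 2 + wy ^ 2)) := by
    have d1 : ((k : ℝ) + 1) * (-ζy * (w ^ 2 + f ^ 2)) ≤ (k + 1) * (2 * ((w ^ 2 + f ^ 2) / θ)) := by
      apply mul_le_mul_of_nonneg_left _ (by positivity)
      linarith
    have d2 : (2 * k + 2 + Λ ^ 2) / θ * (w ^ 2 + f ^ 2) ≤
        (2 * k + 2 + Λ ^ 2) / θ * (13 * Λ ^ 2 * (p ^ 2 + q ^ 2)) :=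
      mul_le_mul_of_nonneg_left S (by positivity)
    have e : (2 * k + 2 + Λ ^ 2) / θ * (w ^ 2 + f ^ 2)
        = (k + 1) * (2 * ((w ^ 2 + f ^ 2) / θ)) + Λ ^ 2 * w ^ 2 / θ + Λ ^ 2 * f ^ 2 / θ := by
      field_simp; ring
    linarith
  have := mul_le_mul_of_nonneg_left tot (pow_nonneg z0 k)
  linear_combination this

lemma Half.trace (h : Half O a u Λ R) {t b y₀ : ℝ} (hb0 : 0 < b) (hb1 : b ≤ 1) (hy0 : 0 ≤ y₀)
    (hyb : y₀ ≤ b) (ht : |t| ≤ 2) (hR1 : 1 ≤ R) (hR2 : R ≤ 2)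
    (hsub : Icc (t - b, 0) (t + b, b) ⊆ O) (k : ℕ) {θ : ℝ} (hθ : 0 < θ) (hθ1 : θ ≤ 1) :
    ∫ x in (t - b)..(t + b),
        zt t b (x, y₀) ^ (k + 1) * (Xop R u (x, y₀) ^ 2 + Cj R a u (x, y₀) ^ 2) ≤
      13 * Λ ^ 2 * (2 * k + 2 + Λ ^ 2) / θ *
        (∫ z in Icc (t - b, 0) (t + b, b), zt t b z ^ k * (dX u z ^ 2 + dY u z ^ 2))
      + θ * ∫ z in Icc (t - b, 0) (t + b, b),
          zt t b z ^ (k + 2) * (dX (Xop R u) z ^ 2 + dY (Xop R u) z ^ 2) := by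
  have hO := h.hO
  have hz := zt_sm (O := O) t b
  have ux := h.hu.dX hO
  have uy := h.hu.dY hO
  have hw := h.hu.Xop hO R
  have hf := h.ha.Cj h.hu hO R
  have wx := hw.dX hO
  have wy := hw.dY hO
  have hss : Icc (t - b, y₀) (t + b, b) ⊆ Icc (t - b, 0) (t + b, b) :=
    Icc_subset_Icc ⟨le_rfl, hy0⟩ le_rfl
  have hsub' := hss.trans hsub
  have hG := (hz.pow (k + 1)).mul ((hw.pow 2).add (hf.pow 2))
  have hdiv := div_box hO (sm_const 0) hG (A := t - b) (B := t + b) (c := y₀) (d := b)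
    (by linarith) hyb hsub'
  have e0 : (0 : ℝ) ^ (k + 1) = 0 := by simp
  simp only [zt_top, e0, zero_mul, intervalIntegral.integral_zero, dX_const, zero_add, zero_sub,
    add_zero, sub_zero] at hdiv
  have hS1 := (hz.pow k).mul ((ux.pow 2).add (uy.pow 2))
  have hS2 := (hz.pow (k + 2)).mul ((wx.pow 2).add (wy.pow 2))
  have hb : ∀ z ∈ Icc (t - b, 0) (t + b, b), z ∈ Icc (t - b, -b) (t + b, b) := by
    intro z hz
    exact ⟨⟨hz.1.1, by have := hz.1.2; simp only at this ⊢; linarith⟩, hz.2⟩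
  have m1 := int_mono_set hS1 hsub hss (fun z hz =>
    mul_nonneg (pow_nonneg (zt_bounds hb0 hb1 (hb z hz)).1 _) (by positivity))
  have m2 := int_mono_set hS2 hsub hss (fun z hz =>
    mul_nonneg (pow_nonneg (zt_bounds hb0 hb1 (hb z hz)).1 _) (by positivity))
  have hΛ := h.hΛ
  have hc : 0 ≤ 13 * Λ ^ 2 * (2 * k + 2 + Λ ^ 2) / θ := by positivity
  have m3 := mul_le_mul_of_nonneg_left m1 hc
  have m4 := mul_le_mul_of_nonneg_left m2 hθ.le
  refine le_trans ?_ (add_le_add m3 m4)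
  rw [← integral_const_mul, ← integral_const_mul, ← integral_add
    (((sm_const _).mul hS1).intOn hsub') (((sm_const _).mul hS2).intOn hsub')]
  have e : ∀ r s : ℝ, -r = s → s = -r := fun r s h => h.symm
  have hdiv' := congrArg (fun r => -r) hdiv
  simp only [neg_neg] at hdiv'
  rw [← hdiv', ← integral_neg]
  have hneg : Sm O (fun z => -dY (fun z => zt t b z ^ (k + 1) *
      (Xop R u z ^ 2 + Cj R a u z ^ 2)) z) := ContDiffOn.neg (hG.dY hO)
  apply int_mono hneg (((sm_const _).mul hS1).add ((sm_const _).mul hS2)) hsub'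
  intro z hzI
  have hzO := hsub' hzI
  obtain ⟨z0, z1, zx, zy⟩ := zt_bounds hb0 hb1 (hb z (hss hzI))
  rw [dY_mul (hz.pow (k + 1)) ((hw.pow 2).add (hf.pow 2)) hO hzO, dY_pow hz (k + 1) hO hzO,
    dY_add (hw.pow 2) (hf.pow 2) hO hzO, dY_pow hw 2 hO hzO, dY_pow hf 2 hO hzO, h.cry hzO]
  obtain ⟨⟨h1, h2⟩, h3, h4⟩ := hss hzI
  simp only at h1 h2 h3 h4
  have ht' := abs_le.1 ht
  have := trace_alg (k := k) (ζ := zt t b z) (w := Xop R u z) (f := Cj R a u z)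
    (wx := dX (Xop R u) z) (wy := dY (Xop R u) z) (x := z.1) (y := z.2 - R) (p := dX u z)
    (q := dY u z) z0 zy (h.apos hzO) (h.hi z hzO) hΛ hθ hθ1 rfl rfl
    (abs_le.2 ⟨by linarith [ht'.1], by linarith [ht'.2]⟩)
    (abs_le.2 ⟨by linarith [ht'.1], by linarith [ht'.2]⟩)
  refine le_trans (le_of_eq ?_) this
  have hk : k + 1 - 1 = k := by omega
  rw [hk]
  push_cast
  ring

end Neck

namespace Neck

variable {O N : Set (ℝ × ℝ)} {a u P : ℝ × ℝ → ℝ} {Λ R : ℝ}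

lemma Sm.mono (h : Sm O P) (hN : N ⊆ O) : Sm N P := ContDiffOn.mono h hN

/-- second derivative relation where the coefficient is one -/
lemma Sol.lap (h : Sol O a u Λ) (hN : IsOpen N) (hNO : N ⊆ O) (ha : ∀ z ∈ N, a z = 1)
    {z : ℝ × ℝ} (hz : z ∈ N) : dY (dY u) z = - dX (dX u) z := by
  have e1 : dX a z = 0 := by
    rw [dX_congr hN (G := fun _ => 1) ha hz, dX_const]
  have e2 : dY a z = 0 := by
    rw [dY_congr hN (G := fun _ => 1) ha hz, dY_const]
  have := h.pde z (hNO hz)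
  rw [e1, e2, ha z hz] at this
  linarith

lemma Half.n_f0x (h : Half O a u Λ R) (hN : IsOpen N) (hNO : N ⊆ O) (ha : ∀ z ∈ N, a z = 1)
    {z : ℝ × ℝ} (hz : z ∈ N) :
    dX (Cj R a u) z = dX u z + z.1 * dX (dX u) z + (z.2 - R) * dX (dY u) z := by
  have hO := h.hO
  rw [h.crx (hNO hz), dY_Xop h.hu hO (hNO hz), ha z hz, h.lap hN hNO ha hz]
  ring

lemma Half.n_wy (h : Half O a u Λ R) (hN : IsOpen N) (hNO : N ⊆ O) (ha : ∀ z ∈ N, a z = 1)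
    {z : ℝ × ℝ} (hz : z ∈ N) :
    dY (Xop R u) z = - (z.1 * dX (dX u) z) - dX u z - (z.2 - R) * dX (dY u) z := by
  rw [dY_Xop h.hu h.hO (hNO hz), h.lap hN hNO ha hz]
  ring

lemma Half.n_w1 (h : Half O a u Λ R) (hN : IsOpen N) (hNO : N ⊆ O) (ha : ∀ z ∈ N, a z = 1)
    {z : ℝ × ℝ} (hz : z ∈ N) :
    Xop R (Xop R u) z = ((z.2 - R) ^ 2 - z.1 ^ 2) * dX (dX u) z - z.1 * dX u z
      - 2 * z.1 * (z.2 - R) * dX (dY u) z - (z.2 - R) * dY u z := by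
  show z.1 * dY (Xop R u) z - (z.2 - R) * dX (Xop R u) z = _
  rw [h.n_wy hN hNO ha hz, dX_Xop h.hu h.hO (hNO hz)]
  ring

lemma Half.n_f1 (h : Half O a u Λ R) (hN : IsOpen N) (hNO : N ⊆ O) (ha : ∀ z ∈ N, a z = 1)
    {z : ℝ × ℝ} (hz : z ∈ N) :
    Cj R a (Xop R u) z = z.1 * dY u z + (z.1 * z.1 - (z.2 - R) * (z.2 - R)) * dX (dY u) z
      - (2 * z.1 * ((z.2 - R) * dX (dX u) z) + (z.2 - R) * dX u z) := by
  show a z * (z.1 * dX (Xop R u) z + (z.2 - R) * dY (Xop R u) z) = _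
  rw [h.n_wy hN hNO ha hz, dX_Xop h.hu h.hO (hNO hz), ha z hz]
  ring

lemma Half.n_f1x (h : Half O a u Λ R) (hN : IsOpen N) (hNO : N ⊆ O) (ha : ∀ z ∈ N, a z = 1)
    {z : ℝ × ℝ} (hz : z ∈ N) :
    dX (Cj R a (Xop R u)) z = dY u z + 3 * z.1 * dX (dY u) z
      + (z.1 ^ 2 - (z.2 - R) ^ 2) * dX (dX (dY u)) z
      - 3 * (z.2 - R) * dX (dX u) z - 2 * z.1 * (z.2 - R) * dX (dX (dX u)) z := by
  have hO := h.hO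
  have g := (h.hu.dX hO).mono hNO
  have k := (h.hu.dY hO).mono hNO
  have g1 := g.dX hN
  have k1 := k.dX hN
  have s := (sm_snd (O := N)).sub (sm_const R)
  have x := (sm_fst (O := N))
  have x2 := (sm_const (O := N) 2).mul x
  rw [dX_congr hN (fun z hz => h.n_f1 hN hNO ha hz) hz,
    dX_sub ((x.mul k).add (((x.mul x).sub (s.mul s)).mul k1)) ((x2.mul (s.mul g1)).add (s.mul g)) hN hz,
    dX_add (x.mul k) (((x.mul x).sub (s.mul s)).mul k1) hN hz,
    dX_add (x2.mul (s.mul g1)) (s.mul g) hN hz,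
    dX_mul x k hN hz, dX_mul ((x.mul x).sub (s.mul s)) k1 hN hz, dX_mul x2 (s.mul g1) hN hz,
    dX_mul s g hN hz, dX_mul s g1 hN hz, dX_mul (sm_const (O := N) 2) x hN hz,
    dX_sub (x.mul x) (s.mul s) hN hz, dX_mul x x hN hz, dX_mul s s hN hz,
    dX_sub sm_snd (sm_const R) hN hz, dX_fst, dX_snd, dX_const, dX_const]
  ring

/-- one-dimensional lemma -/
lemma line_le {A B y : ℝ} (hAB : A ≤ B) (hO : IsOpen O) (hP : Sm O P)
    (hl : ∀ x ∈ Icc A B, (x, y) ∈ O) (hA : P (A, y) = 0) (hB : P (B, y) = 0) {F M : ℝ → ℝ}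
    (hF : IntervalIntegrable F volume A B) (hM : IntervalIntegrable M volume A B)
    (h : ∀ x ∈ Icc A B, F x ≤ dX P (x, y) + M x) : ∫ x in A..B, F x ≤ ∫ x in A..B, M x := by
  have i := (hP.dX hO).lineInt hAB hl
  have e : ∫ x in A..B, dX P (x, y) = 0 := by
    rw [intervalIntegral.integral_eq_sub_of_hasDerivAt (f := fun x => P (x, y)) ?_ i, hA, hB, sub_zero]
    intro x hx
    rw [uIcc_of_le hAB] at hx
    exact hP.hasX hO (hl x hx)
  have := intervalIntegral.integral_mono_on hAB hF (i.add hM) h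
  rwa [intervalIntegral.integral_add i hM, e, zero_add] at this

lemma line_pt {A B y t : ℝ} (hAt : A ≤ t) (htB : t ≤ B) (hO : IsOpen O) (hP : Sm O P)
    (hl : ∀ x ∈ Icc A B, (x, y) ∈ O) (hA : P (A, y) = 0) {M : ℝ → ℝ}
    (hM : IntervalIntegrable M volume A B) (hM0 : ∀ x ∈ Icc A B, 0 ≤ M x)
    (h : ∀ x ∈ Icc A B, dX P (x, y) ≤ M x) : P (t, y) ≤ ∫ x in A..B, M x := by
  have hl' : ∀ x ∈ Icc A t, (x, y) ∈ O := fun x hx => hl x ⟨hx.1, hx.2.trans htB⟩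
  have i := (hP.dX hO).lineInt hAt hl'
  have e : ∫ x in A..t, dX P (x, y) = P (t, y) := by
    rw [intervalIntegral.integral_eq_sub_of_hasDerivAt (f := fun x => P (x, y)) ?_ i, hA, sub_zero]
    intro x hx
    rw [uIcc_of_le hAt] at hx
    exact hP.hasX hO (hl' x hx)
  have m1 : IntervalIntegrable M volume A t := hM.mono_set (by
    rw [uIcc_of_le hAt, uIcc_of_le (hAt.trans htB)]; exact Icc_subset_Icc le_rfl htB)
  have m2 : IntervalIntegrable M volume t B := hM.mono_set (by
    rw [uIcc_of_le htB, uIcc_of_le (hAt.trans htB)]; exact Icc_subset_Icc hAt le_rfl)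
  have := intervalIntegral.integral_mono_on hAt i m1
    (fun x hx => h x ⟨hx.1, hx.2.trans htB⟩)
  rw [e] at this
  rw [← intervalIntegral.integral_add_adjacent_intervals m1 m2]
  have : 0 ≤ ∫ x in t..B, M x :=
    intervalIntegral.integral_nonneg htB (fun x hx => hM0 x ⟨hAt.trans hx.1, hx.2⟩)
  linarith

lemma alg0 {ζ ζx x R g k g1 k1 : ℝ} (z0 : 0 ≤ ζ) (z1 : ζ ≤ 1) (zx : |ζx| ≤ 2) (hx : |x| ≤ 3)
    (hR1 : 1 ≤ R) (hR2 : R ≤ 2) :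
    ζ ^ 4 * (2 * R * (g ^ 2 + x * (g * g1 - k * k1))) ≤
      (4 * ζ ^ 3 * ζx * (R * x * (g ^ 2 - k ^ 2)) + ζ ^ 4 * (R * (g ^ 2 - k ^ 2)
        + R * x * (2 * g * g1 - 2 * k * k1))) + 50 * (ζ ^ 3 * (g ^ 2 + k ^ 2)) := by
  have hzx : |ζx * x| ≤ 6 := by
    rw [abs_mul]; nlinarith [abs_nonneg ζx, abs_nonneg x]
  have h1 : ζ * (g ^ 2 + k ^ 2) - 4 * (ζx * x) * (g ^ 2 - k ^ 2) ≤ 25 * (g ^ 2 + k ^ 2) := by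
    have := abs_le.1 hzx
    nlinarith [sq_nonneg g, sq_nonneg k]
  have h2 : R * (ζ * (g ^ 2 + k ^ 2) - 4 * (ζx * x) * (g ^ 2 - k ^ 2)) ≤ 50 * (g ^ 2 + k ^ 2) := by
    nlinarith [sq_nonneg g, sq_nonneg k]
  have := mul_le_mul_of_nonneg_left h2 (pow_nonneg z0 3)
  linear_combination this

lemma alg1 {ζ ζx x R g k g1 k1 g2 k2 : ℝ} (z0 : 0 ≤ ζ) (z1 : ζ ≤ 1) (zx : |ζx| ≤ 2) (hx : |x| ≤ 3)
    (hR1 : 1 ≤ R) (hR2 : R ≤ 2) :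
    ζ ^ 6 * (2 * R * (((R ^ 2 - x ^ 2) * g1 - x * g) * (3 * g1 + 2 * x * g2)
        + (2 * x * k1 + k) * (k + 3 * x * k1 - (R ^ 2 - x ^ 2) * k2))) ≤
      (6 * ζ ^ 5 * ζx * (2 * R * (x * (R ^ 2 - x ^ 2) * (g1 ^ 2 - k1 ^ 2) - 2 * x ^ 2 * (g * g1)
          - (R ^ 2 - x ^ 2) * (k * k1)))
        + ζ ^ 6 * (2 * R * ((R ^ 2 - 3 * x ^ 2) * (g1 ^ 2 - k1 ^ 2)
          + x * (R ^ 2 - x ^ 2) * (2 * g1 * g2 - 2 * k1 * k2)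
          - (4 * x * (g * g1) + 2 * x ^ 2 * (g1 * g1 + g * g2))
          - (-2 * x * (k * k1) + (R ^ 2 - x ^ 2) * (k1 * k1 + k * k2)))))
      + 2100 * (ζ ^ 5 * ((g ^ 2 + k ^ 2) + (g1 ^ 2 + k1 ^ 2))) := by
  have hx' := abs_le.1 hx
  have hx2 : x ^ 2 ≤ 9 := by nlinarith
  have hR : R ^ 2 ≤ 4 := by nlinarith
  have hR' : 1 ≤ R ^ 2 := by nlinarith
  have s1 : |R ^ 2 - x ^ 2| ≤ 9 := abs_le.2 ⟨by linarith, by linarith [sq_nonneg x]⟩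
  have s2 : |x * (R ^ 2 - x ^ 2)| ≤ 27 := by
    rw [abs_mul]; nlinarith [abs_nonneg x, abs_nonneg (R ^ 2 - x ^ 2)]
  have q : ∀ c p q m : ℝ, |c| ≤ m → c * (p * q) ≤ m / 2 * (p ^ 2 + q ^ 2) := by
    intro c p q m hc
    have := abs_le.1 hc
    nlinarith [mul_nonneg (sub_nonneg.2 this.2) (sq_nonneg (p + q)),
      mul_nonneg (sub_nonneg.2 this.1) (sq_nonneg (p - q))]
  have q' : ∀ c p m : ℝ, |c| ≤ m → c * p ^ 2 ≤ m * p ^ 2 := by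
    intro c p m hc
    exact mul_le_mul_of_nonneg_right (abs_le.1 hc).2 (sq_nonneg p)
  have b0 : (2 * R ^ 2 + 2 * x ^ 2) * g1 ^ 2 + x * (g * g1) + k ^ 2 + 3 * x * (k * k1)
      + (2 * R ^ 2 + 2 * x ^ 2) * k1 ^ 2 ≤ 31 * ((g ^ 2 + k ^ 2) + (g1 ^ 2 + k1 ^ 2)) := by
    have r1 := q x g g1 3 hx
    have r2 := q (3 * x) k k1 9 (abs_le.2 ⟨by linarith, by linarith⟩)
    have r3 : (2 * R ^ 2 + 2 * x ^ 2) * g1 ^ 2 ≤ 26 * g1 ^ 2 := by gcongr; linarith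
    have r4 : (2 * R ^ 2 + 2 * x ^ 2) * k1 ^ 2 ≤ 26 * k1 ^ 2 := by gcongr; linarith
    linarith [sq_nonneg g, sq_nonneg k, sq_nonneg g1, sq_nonneg k1]
  have b1 : |x * (R ^ 2 - x ^ 2) * (g1 ^ 2 - k1 ^ 2) - 2 * x ^ 2 * (g * g1)
          - (R ^ 2 - x ^ 2) * (k * k1)| ≤ 41 * ((g ^ 2 + k ^ 2) + (g1 ^ 2 + k1 ^ 2)) := by
    have n : ∀ c m : ℝ, |c| ≤ m → |-c| ≤ m := fun c m h => by rwa [abs_neg]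
    have s3 : |2 * x ^ 2| ≤ 18 := by rw [abs_of_nonneg (by positivity)]; linarith
    rw [abs_le]
    constructor
    · linarith [q' _ g1 _ (n _ _ s2), q' _ k1 _ s2, q _ g g1 _ s3, q _ k k1 _ s1,
        sq_nonneg g, sq_nonneg k, sq_nonneg g1, sq_nonneg k1]
    · linarith [q' _ g1 _ s2, q' _ k1 _ (n _ _ s2), q _ g g1 _ (n _ _ s3), q _ k k1 _ (n _ _ s1),
        sq_nonneg g, sq_nonneg k, sq_nonneg g1, sq_nonneg k1]
  set S := (g ^ 2 + k ^ 2) + (g1 ^ 2 + k1 ^ 2) with hS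
  have hS0 : 0 ≤ S := by positivity
  set T := x * (R ^ 2 - x ^ 2) * (g1 ^ 2 - k1 ^ 2) - 2 * x ^ 2 * (g * g1)
          - (R ^ 2 - x ^ 2) * (k * k1) with hT
  set B := (2 * R ^ 2 + 2 * x ^ 2) * g1 ^ 2 + x * (g * g1) + k ^ 2 + 3 * x * (k * k1)
      + (2 * R ^ 2 + 2 * x ^ 2) * k1 ^ 2 with hB
  have c1 : -(ζx * T) ≤ 82 * S := by
    have : |ζx * T| ≤ 2 * (41 * S) := by
      rw [abs_mul]; gcongr
    linarith [(abs_le.1 this).1]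
  have c2 : ζ * B ≤ 31 * S := by
    calc ζ * B ≤ ζ * (31 * S) := by gcongr
      _ ≤ 1 * (31 * S) := by gcongr
      _ = _ := by ring
  have c3 : 2 * R * (ζ * B - 6 * (ζx * T)) ≤ 2 * R * (523 * S) := by
    gcongr; linarith
  have c4 : 2 * R * (523 * S) ≤ 2100 * S := by nlinarith
  have := mul_le_mul_of_nonneg_left (c3.trans c4) (pow_nonneg z0 5)
  rw [← sub_nonneg] at this ⊢
  refine this.trans_eq ?_
  rw [hB, hT]
  ring

end Neck

namespace Neck

/-- weighted energy on the half box -/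
noncomputable def En (t b : ℝ) (k : ℕ) (v : ℝ × ℝ → ℝ) : ℝ :=
  ∫ z in Icc (t - b, 0) (t + b, b), zt t b z ^ k * (dX v z ^ 2 + dY v z ^ 2)

/-- data on one half of the box -/
structure NHalf (O N : Set (ℝ × ℝ)) (a u : ℝ × ℝ → ℝ) (Λ R t b : ℝ) : Prop
    extends Half O a u Λ R where
  hN : IsOpen N
  hNO : N ⊆ O
  haN : ∀ z ∈ N, a z = 1
  hsub : Icc (t - b, 0) (t + b, b) ⊆ O
  hln : ∀ x ∈ Icc (t - b) (t + b), (x, 0) ∈ N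
  hb0 : 0 < b
  hb1 : b ≤ 1
  ht : |t| ≤ 2
  hR1 : 1 ≤ R
  hR2 : R ≤ 2

variable {O N : Set (ℝ × ℝ)} {a u v : ℝ × ℝ → ℝ} {Λ R t b : ℝ}

lemma NHalf.box (h : NHalf O N a u Λ R t b) {z : ℝ × ℝ} (hz : z ∈ Icc (t - b, 0) (t + b, b)) :
    z ∈ Icc (t - b, -b) (t + b, b) :=
  ⟨⟨hz.1.1, by have := hz.1.2; have := h.hb0; simp only at *; linarith⟩, hz.2⟩

lemma NHalf.next (h : NHalf O N a u Λ R t b) : NHalf O N a (Xop R u) Λ R t b :=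
  ⟨h.toHalf.next, h.hN, h.hNO, h.haN, h.hsub, h.hln, h.hb0, h.hb1, h.ht, h.hR1, h.hR2⟩

lemma NHalf.En_nonneg (h : NHalf O N a u Λ R t b) (k : ℕ) (v : ℝ × ℝ → ℝ) : 0 ≤ En t b k v :=
  int_nonneg (fun z hz => mul_nonneg (pow_nonneg (zt_bounds h.hb0 h.hb1 (h.box hz)).1 _)
    (by positivity))

lemma NHalf.absx (h : NHalf O N a u Λ R t b) {x : ℝ} (hx : x ∈ Icc (t - b) (t + b)) : |x| ≤ 3 := by
  have := abs_le.1 h.ht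
  have := h.hb1
  exact abs_le.2 ⟨by linarith [hx.1], by linarith [hx.2]⟩

lemma NHalf.energyX (h : NHalf O N a u Λ R t b) (k : ℕ) :
    En t b (k + 2) (Xop R u) ≤
      2 * Λ * (∫ x in (t - b)..(t + b),
        zt t b (x, 0) ^ (k + 2) * (Xop R u (x, 0) * dX (Cj R a u) (x, 0)))
      + 104 * (k + 2) ^ 2 * Λ ^ 2 * En t b k u := by
  have hb0 := h.hb0
  have hO := h.hO
  have e := h.next.energy (c := 0) h.hb0 h.hb1 (by linarith) hb0.le h.hsub k
  have hbd : ∫ x in (t - b)..(t + b), zt t b (x, 0) ^ (k + 2) *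
      (Xop R u (x, 0) * (a (x, 0) * dY (Xop R u) (x, 0))) =
      - ∫ x in (t - b)..(t + b),
        zt t b (x, 0) ^ (k + 2) * (Xop R u (x, 0) * dX (Cj R a u) (x, 0)) := by
    rw [← intervalIntegral.integral_neg]
    apply intervalIntegral.integral_congr
    intro x hx
    rw [uIcc_of_le (by linarith)] at hx
    simp only
    rw [h.crx (h.hNO (h.hln x hx))]
    ring
  rw [hbd] at e
  have hz := zt_sm (O := O) t b
  have i : ∫ z in Icc (t - b, 0) (t + b, b), zt t b z ^ k * Xop R u z ^ 2 ≤ 13 * En t b k u := by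
    unfold En
    rw [← integral_const_mul]
    apply int_mono ((hz.pow k).mul ((h.hu.Xop hO R).pow 2)) ((sm_const 13).mul ((hz.pow k).mul
      (((h.hu.dX hO).pow 2).add ((h.hu.dY hO).pow 2)))) h.hsub
    intro z hzI
    have hzz := (zt_bounds h.hb0 h.hb1 (h.box hzI)).1
    have hx := h.absx (x := z.1) ⟨hzI.1.1, hzI.2.1⟩
    have hy1 : 0 ≤ z.2 := hzI.1.2
    have hy2 : z.2 ≤ b := hzI.2.2
    have := h.hb1
    have := h.hR1
    have := h.hR2
    have x2 : z.1 ^ 2 ≤ 9 := by nlinarith [abs_le.1 hx]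
    have y2 : (z.2 - R) ^ 2 ≤ 4 := by nlinarith
    have c : Xop R u z ^ 2 ≤ 13 * (dX u z ^ 2 + dY u z ^ 2) := by
      have c1 : Xop R u z ^ 2 ≤ (z.1 ^ 2 + (z.2 - R) ^ 2) * (dX u z ^ 2 + dY u z ^ 2) := by
        show (z.1 * dY u z - (z.2 - R) * dX u z) ^ 2 ≤ _
        nlinarith [sq_nonneg (z.1 * dX u z + (z.2 - R) * dY u z)]
      refine c1.trans (mul_le_mul_of_nonneg_right (by linarith) (by positivity))
    have := mul_le_mul_of_nonneg_left c (pow_nonneg hzz k)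
    linarith
  have i2 := mul_le_mul_of_nonneg_left i (show 0 ≤ 8 * ((k : ℝ) + 2) ^ 2 * Λ ^ 2 by positivity)
  unfold En at *
  linarith

lemma NHalf.tr (h : NHalf O N a u Λ R t b) {y₀ : ℝ} (hy0 : 0 ≤ y₀) (hyb : y₀ ≤ b) (k : ℕ) {θ : ℝ}
    (hθ : 0 < θ) (hθ1 : θ ≤ 1) :
    ∫ x in (t - b)..(t + b),
        zt t b (x, y₀) ^ (k + 1) * (Xop R u (x, y₀) ^ 2 + Cj R a u (x, y₀) ^ 2) ≤
      13 * Λ ^ 2 * (2 * k + 2 + Λ ^ 2) / θ * En t b k u + θ * En t b (k + 2) (Xop R u) :=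
  h.toHalf.trace h.hb0 h.hb1 hy0 hyb h.ht h.hR1 h.hR2 h.hsub k hθ hθ1

lemma sq4 {x y p q : ℝ} (h : 1 / 4 ≤ x ^ 2 + y ^ 2) :
    p ^ 2 + q ^ 2 ≤ 4 * ((x * q - y * p) ^ 2 + (x * p + y * q) ^ 2) := by
  have : (x * q - y * p) ^ 2 + (x * p + y * q) ^ 2 = (x ^ 2 + y ^ 2) * (p ^ 2 + q ^ 2) := by ring
  rw [this]
  nlinarith [add_nonneg (sq_nonneg p) (sq_nonneg q)]

/-- first order trace on a line in the neck -/
lemma NHalf.line0 (h : NHalf O N a u Λ R t b) {y₀ : ℝ} (hy0 : 0 ≤ y₀) (hyb : y₀ ≤ b)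
    (hl : ∀ x ∈ Icc (t - b) (t + b), (x, y₀) ∈ N) (hyR : 1 / 2 ≤ R - y₀) {θ : ℝ}
    (hθ : 0 < θ) (hθ1 : θ ≤ 1) :
    ∫ x in (t - b)..(t + b), zt t b (x, y₀) ^ 3 * (dX u (x, y₀) ^ 2 + dY u (x, y₀) ^ 2) ≤
      4 * (13 * Λ ^ 2 * (6 + Λ ^ 2) / θ * En t b 2 u + θ * En t b 4 (Xop R u)) := by
  have hb0 := h.hb0
  have hO := h.hO
  have e := h.tr hy0 hyb 2 hθ hθ1
  norm_num at e
  have hz := zt_sm (O := O) t b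
  have hl' : ∀ x ∈ Icc (t - b) (t + b), (x, y₀) ∈ O := fun x hx => h.hNO (hl x hx)
  refine le_trans ?_ (mul_le_mul_of_nonneg_left e (by norm_num : (0 : ℝ) ≤ 4))
  rw [← intervalIntegral.integral_const_mul]
  apply intervalIntegral.integral_mono_on (by linarith)
    (((hz.pow 3).mul (((h.hu.dX hO).pow 2).add ((h.hu.dY hO).pow 2))).lineInt (by linarith) hl')
    (((sm_const 4).mul ((hz.pow 3).mul (((h.hu.Xop hO R).pow 2).add
      ((h.ha.Cj h.hu hO R).pow 2)))).lineInt (by linarith) hl')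
  intro x hx
  have hzz := (zt_bounds h.hb0 h.hb1 (h.box (z := (x, y₀)) ⟨⟨hx.1, hy0⟩, ⟨hx.2, hyb⟩⟩)).1
  have hs : dX u (x, y₀) ^ 2 + dY u (x, y₀) ^ 2 ≤
      4 * (Xop R u (x, y₀) ^ 2 + Cj R a u (x, y₀) ^ 2) := by
    simp only [Xop, Cj, h.haN _ (hl x hx), one_mul]
    exact sq4 (by nlinarith [sq_nonneg x])
  have := mul_le_mul_of_nonneg_left hs (pow_nonneg hzz 3)
  linarith

/-- second order trace on a line in the neck -/
lemma NHalf.line1 (h : NHalf O N a u Λ R t b) {y₀ : ℝ} (hy0 : 0 ≤ y₀) (hyb : y₀ ≤ b)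
    (hl : ∀ x ∈ Icc (t - b) (t + b), (x, y₀) ∈ N) (hyR : 1 / 2 ≤ R - y₀) {θ : ℝ}
    (hθ : 0 < θ) (hθ1 : θ ≤ 1) :
    ∫ x in (t - b)..(t + b), zt t b (x, y₀) ^ 5 * ((dX u (x, y₀) ^ 2 + dY u (x, y₀) ^ 2)
        + (dX (dX u) (x, y₀) ^ 2 + dX (dY u) (x, y₀) ^ 2)) ≤
      36 * (13 * Λ ^ 2 * (6 + Λ ^ 2) * En t b 2 u + En t b 4 (Xop R u)) +
      32 * (13 * Λ ^ 2 * (10 + Λ ^ 2) / θ * En t b 4 (Xop R u) + θ * En t b 6 (Xop R (Xop R u))) := by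
  have hb0 := h.hb0
  have hO := h.hO
  have e := h.line0 hy0 hyb hl hyR one_pos le_rfl
  have e' := h.next.tr hy0 hyb 4 hθ hθ1
  norm_num at e e'
  have hz := zt_sm (O := O) t b
  have hl' : ∀ x ∈ Icc (t - b) (t + b), (x, y₀) ∈ O := fun x hx => h.hNO (hl x hx)
  have i0 := ((hz.pow 3).mul (((h.hu.dX hO).pow 2).add ((h.hu.dY hO).pow 2)))
  have hw := h.hu.Xop hO R
  have i1 := ((hz.pow 5).mul (((hw.Xop hO R).pow 2).add ((h.ha.Cj hw hO R).pow 2)))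
  have j0 := ((sm_const 9).mul i0).lineInt (by linarith) hl'
  have j1 := ((sm_const 32).mul i1).lineInt (by linarith) hl'
  refine le_trans ?_ (add_le_add (mul_le_mul_of_nonneg_left e (by norm_num : (0 : ℝ) ≤ 9))
    (mul_le_mul_of_nonneg_left e' (by norm_num : (0 : ℝ) ≤ 32)) |>.trans (by linarith))
  rw [← intervalIntegral.integral_const_mul, ← intervalIntegral.integral_const_mul,
    ← intervalIntegral.integral_add j0 j1]
  apply intervalIntegral.integral_mono_on (by linarith)
    (((hz.pow 5).mul ((((h.hu.dX hO).pow 2).add ((h.hu.dY hO).pow 2)).add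
      (((((h.hu.dX hO).dX hO).pow 2).add (((h.hu.dY hO).dX hO).pow 2))))).lineInt (by linarith) hl')
    (j0.add j1)
  intro x hx
  obtain ⟨z0, z1, -, -⟩ := zt_bounds h.hb0 h.hb1 (h.box (z := (x, y₀)) ⟨⟨hx.1, hy0⟩, ⟨hx.2, hyb⟩⟩)
  have hzN := hl x hx
  have hq : 1 / 4 ≤ x ^ 2 + (y₀ - R) ^ 2 := by nlinarith [sq_nonneg x]
  have hs : dX (Xop R u) (x, y₀) ^ 2 + dY (Xop R u) (x, y₀) ^ 2 ≤
      4 * (Xop R (Xop R u) (x, y₀) ^ 2 + Cj R a (Xop R u) (x, y₀) ^ 2) := by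
    rw [show Xop R (Xop R u) (x, y₀) = x * dY (Xop R u) (x, y₀) - (y₀ - R) * dX (Xop R u) (x, y₀)
      from rfl, show Cj R a (Xop R u) (x, y₀) = a (x, y₀) * (x * dX (Xop R u) (x, y₀) +
      (y₀ - R) * dY (Xop R u) (x, y₀)) from rfl, h.haN _ hzN, one_mul]
    exact sq4 hq
  have hs2 : dX (dX u) (x, y₀) ^ 2 + dX (dY u) (x, y₀) ^ 2 ≤
      8 * (dX (Xop R u) (x, y₀) ^ 2 + dY (Xop R u) (x, y₀) ^ 2)
      + 8 * (dX u (x, y₀) ^ 2 + dY u (x, y₀) ^ 2) := by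
    have ex := dX_Xop (R := R) h.hu hO (h.hNO hzN)
    have ey := h.n_wy h.hN h.hNO h.haN hzN
    simp only at ex ey
    have := sq4 (p := dX (dX u) (x, y₀)) (q := dX (dY u) (x, y₀)) hq
    have e1 : x * dX (dY u) (x, y₀) - (y₀ - R) * dX (dX u) (x, y₀) =
      dX (Xop R u) (x, y₀) - dY u (x, y₀) := by linarith
    have e2 : x * dX (dX u) (x, y₀) + (y₀ - R) * dX (dY u) (x, y₀) =
      -(dY (Xop R u) (x, y₀) + dX u (x, y₀)) := by linarith
    rw [e1, e2] at this
    nlinarith [sq_nonneg (dX (Xop R u) (x, y₀) + dY u (x, y₀)),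
      sq_nonneg (dY (Xop R u) (x, y₀) - dX u (x, y₀))]
  have c1 : zt t b (x, y₀) ^ 5 ≤ zt t b (x, y₀) ^ 3 := pow_le_pow_of_le_one z0 z1 (by norm_num)
  have c2 := mul_le_mul_of_nonneg_right c1
    (show 0 ≤ dX u (x, y₀) ^ 2 + dY u (x, y₀) ^ 2 by positivity)
  have c3 := mul_le_mul_of_nonneg_left (hs2.trans (add_le_add_left
    (mul_le_mul_of_nonneg_left hs (by norm_num : (0 : ℝ) ≤ 8)) _)) (pow_nonneg z0 5)
  linarith

/-- the pointwise bound -/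
lemma NHalf.pt (h : NHalf O N a u Λ R t b) {y₀ : ℝ} (hy0 : 0 ≤ y₀) (hyb : y₀ ≤ b)
    (hl : ∀ x ∈ Icc (t - b) (t + b), (x, y₀) ∈ N) (hyR : 1 / 2 ≤ R - y₀) :
    zt t b (t, y₀) ^ 6 * (dX u (t, y₀) ^ 2 + dY u (t, y₀) ^ 2) ≤
      13 * (36 * (13 * Λ ^ 2 * (6 + Λ ^ 2) * En t b 2 u + En t b 4 (Xop R u)) +
      32 * (13 * Λ ^ 2 * (10 + Λ ^ 2) * En t b 4 (Xop R u) + En t b 6 (Xop R (Xop R u)))) := by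
  have hb0 := h.hb0
  have hO := h.hO
  have e := h.line1 hy0 hyb hl hyR one_pos le_rfl
  rw [div_one, one_mul] at e
  have hz := zt_sm (O := O) t b
  have hl' : ∀ x ∈ Icc (t - b) (t + b), (x, y₀) ∈ O := fun x hx => h.hNO (hl x hx)
  refine le_trans ?_ (mul_le_mul_of_nonneg_left e (by norm_num : (0 : ℝ) ≤ 13))
  rw [← intervalIntegral.integral_const_mul]
  have ux := h.hu.dX hO
  have uy := h.hu.dY hO
  have gg := (ux.pow 2).add (uy.pow 2)
  have hP := (hz.pow 6).mul gg
  apply line_pt (B := t + b) (A := t - b) (by linarith) (by linarith) hO hP hl' (by simp [zt_left])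
    (((sm_const 13).mul ((hz.pow 5).mul (gg.add ((((ux.dX hO).pow 2).add
      ((uy.dX hO).pow 2)))))).lineInt (by linarith) hl')
  · intro x hx
    obtain ⟨z0, -⟩ := zt_bounds h.hb0 h.hb1 (h.box (z := (x, y₀)) ⟨⟨hx.1, hy0⟩, ⟨hx.2, hyb⟩⟩)
    positivity
  · intro x hx
    obtain ⟨z0, z1, zx, -⟩ := zt_bounds h.hb0 h.hb1 (h.box (z := (x, y₀)) ⟨⟨hx.1, hy0⟩, ⟨hx.2, hyb⟩⟩)
    have hzO := hl' x hx
    rw [dX_mul (hz.pow 6) gg hO hzO, dX_pow hz 6 hO hzO, dX_add (ux.pow 2) (uy.pow 2) hO hzO,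
      dX_pow ux 2 hO hzO, dX_pow uy 2 hO hzO]
    set g := dX u (x, y₀)
    set k := dY u (x, y₀)
    set g1 := dX (dX u) (x, y₀)
    set k1 := dX (dY u) (x, y₀)
    set ζ := zt t b (x, y₀)
    have c1 : dX (zt t b) (x, y₀) * (g ^ 2 + k ^ 2) ≤ 2 * (g ^ 2 + k ^ 2) :=
      mul_le_mul_of_nonneg_right (abs_le.1 zx).2 (by positivity)
    have c2 : ζ * (2 * g * g1 + 2 * k * k1) ≤ (g ^ 2 + k ^ 2) + (g1 ^ 2 + k1 ^ 2) := by
      have : 2 * g * g1 + 2 * k * k1 ≤ (g ^ 2 + k ^ 2) + (g1 ^ 2 + k1 ^ 2) := by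
        nlinarith [sq_nonneg (g - g1), sq_nonneg (k - k1)]
      have p : 0 ≤ (g ^ 2 + k ^ 2) + (g1 ^ 2 + k1 ^ 2) := by positivity
      nlinarith
    have p1 : 0 ≤ g1 ^ 2 + k1 ^ 2 := by positivity
    have c3 : 6 * (dX (zt t b) (x, y₀) * (g ^ 2 + k ^ 2)) + ζ * (2 * g * g1 + 2 * k * k1) ≤
      13 * ((g ^ 2 + k ^ 2) + (g1 ^ 2 + k1 ^ 2)) := by linarith
    have := mul_le_mul_of_nonneg_left c3 (pow_nonneg z0 5)
    push_cast
    norm_num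
    linarith

end Neck

namespace Neck

variable {O N O' N' : Set (ℝ × ℝ)} {a u a' u' : ℝ × ℝ → ℝ} {Λ R t b : ℝ}

/-- the traces of the two halves match -/
structure Match (u u' : ℝ × ℝ → ℝ) (t b : ℝ) : Prop where
  m0 : ∀ x ∈ Icc (t - b) (t + b), dX u' (x, 0) = dX u (x, 0) ∧ dY u' (x, 0) = - dY u (x, 0)
  m1 : ∀ x ∈ Icc (t - b) (t + b), dX (dX u') (x, 0) = dX (dX u) (x, 0) ∧
    dX (dY u') (x, 0) = - dX (dY u) (x, 0)
  m2 : ∀ x ∈ Icc (t - b) (t + b), dX (dX (dX u')) (x, 0) = dX (dX (dX u)) (x, 0) ∧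
    dX (dX (dY u')) (x, 0) = - dX (dX (dY u)) (x, 0)

lemma bdry0 (h : NHalf O N a u Λ R t b) (h' : NHalf O' N' a' u' Λ R t b) (m : Match u u' t b) :
    (∫ x in (t - b)..(t + b), zt t b (x, 0) ^ 4 * (Xop R u (x, 0) * dX (Cj R a u) (x, 0))) +
    (∫ x in (t - b)..(t + b), zt t b (x, 0) ^ 4 * (Xop R u' (x, 0) * dX (Cj R a' u') (x, 0))) ≤
    50 * ∫ x in (t - b)..(t + b), zt t b (x, 0) ^ 3 * (dX u (x, 0) ^ 2 + dY u (x, 0) ^ 2) := by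
  have hb0 := h.hb0
  have hO := h.hO
  have hl : ∀ x ∈ Icc (t - b) (t + b), (x, 0) ∈ O := fun x hx => h.hNO (h.hln x hx)
  have hl' : ∀ x ∈ Icc (t - b) (t + b), (x, 0) ∈ O' := fun x hx => h'.hNO (h'.hln x hx)
  have hz := zt_sm (O := O) t b
  have hz' := zt_sm (O := O') t b
  have i1 := ((hz.pow 4).mul ((h.hu.Xop hO R).mul ((h.ha.Cj h.hu hO R).dX hO))).lineInt
    (A := t - b) (B := t + b) (by linarith) hl
  have i2 := ((hz'.pow 4).mul ((h'.hu.Xop h'.hO R).mul ((h'.ha.Cj h'.hu h'.hO R).dX h'.hO))).lineInt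
    (A := t - b) (B := t + b) (by linarith) hl'
  rw [← intervalIntegral.integral_add i1 i2, ← intervalIntegral.integral_const_mul]
  have g := h.hu.dX hO
  have k := h.hu.dY hO
  have gk := (g.pow 2).sub (k.pow 2)
  have Rx := (sm_const (O := O) R).mul sm_fst
  have i3 := ((sm_const 50).mul ((hz.pow 3).mul ((g.pow 2).add (k.pow 2)))).lineInt
    (A := t - b) (B := t + b) (by linarith) hl
  refine line_le (by linarith) hO ((hz.pow 4).mul (Rx.mul gk)) hl
    (by simp [zt_left]) (by simp [zt_right]) (i1.add i2) i3 ?_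
  intro x hx
  have hzO := hl x hx
  obtain ⟨z0, z1, zx, -⟩ := zt_bounds h.hb0 h.hb1 (h.box (z := (x, 0))
    ⟨⟨hx.1, le_rfl⟩, ⟨hx.2, hb0.le⟩⟩)
  rw [dX_mul (hz.pow 4) (Rx.mul gk) hO hzO, dX_pow hz 4 hO hzO, dX_mul Rx gk hO hzO,
    dX_mul (sm_const R) sm_fst hO hzO, dX_sub (g.pow 2) (k.pow 2) hO hzO, dX_pow g 2 hO hzO,
    dX_pow k 2 hO hzO, dX_const, dX_fst, h.n_f0x h.hN h.hNO h.haN (h.hln x hx),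
    h'.n_f0x h'.hN h'.hNO h'.haN (h'.hln x hx)]
  simp only [Xop]
  rw [(m.m0 x hx).1, (m.m0 x hx).2, (m.m1 x hx).1, (m.m1 x hx).2]
  have := alg0 (ζ := zt t b (x, 0)) (ζx := dX (zt t b) (x, 0)) (x := x) (R := R)
    (g := dX u (x, 0)) (k := dY u (x, 0)) (g1 := dX (dX u) (x, 0)) (k1 := dX (dY u) (x, 0))
    z0 z1 zx (h.absx hx) h.hR1 h.hR2
  push_cast
  norm_num
  rw [← sub_nonneg] at this ⊢
  refine this.trans_eq ?_
  ring

lemma bdry1 (h : NHalf O N a u Λ R t b) (h' : NHalf O' N' a' u' Λ R t b) (m : Match u u' t b) :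
    (∫ x in (t - b)..(t + b), zt t b (x, 0) ^ 6 *
      (Xop R (Xop R u) (x, 0) * dX (Cj R a (Xop R u)) (x, 0))) +
    (∫ x in (t - b)..(t + b), zt t b (x, 0) ^ 6 *
      (Xop R (Xop R u') (x, 0) * dX (Cj R a' (Xop R u')) (x, 0))) ≤
    2100 * ∫ x in (t - b)..(t + b), zt t b (x, 0) ^ 5 * ((dX u (x, 0) ^ 2 + dY u (x, 0) ^ 2)
      + (dX (dX u) (x, 0) ^ 2 + dX (dY u) (x, 0) ^ 2)) := by
  have hb0 := h.hb0
  have hO := h.hO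
  have hl : ∀ x ∈ Icc (t - b) (t + b), (x, 0) ∈ O := fun x hx => h.hNO (h.hln x hx)
  have hl' : ∀ x ∈ Icc (t - b) (t + b), (x, 0) ∈ O' := fun x hx => h'.hNO (h'.hln x hx)
  have hz := zt_sm (O := O) t b
  have hz' := zt_sm (O := O') t b
  have hw := h.hu.Xop hO R
  have hw' := h'.hu.Xop h'.hO R
  have i1 := ((hz.pow 6).mul ((hw.Xop hO R).mul ((h.ha.Cj hw hO R).dX hO))).lineInt
    (A := t - b) (B := t + b) (by linarith) hl
  have i2 := ((hz'.pow 6).mul ((hw'.Xop h'.hO R).mul ((h'.ha.Cj hw' h'.hO R).dX h'.hO))).lineInt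
    (A := t - b) (B := t + b) (by linarith) hl'
  rw [← intervalIntegral.integral_add i1 i2, ← intervalIntegral.integral_const_mul]
  have g := h.hu.dX hO
  have k := h.hu.dY hO
  have g1 := g.dX hO
  have k1 := k.dX hO
  have x1 := sm_fst (O := O)
  have q := (sm_const (O := O) (R ^ 2)).sub (x1.pow 2)
  have p1 := x1.mul q
  have d1 := (g1.pow 2).sub (k1.pow 2)
  have p2 := (sm_const (O := O) 2).mul (x1.pow 2)
  have ggk := g.mul g1
  have kkk := k.mul k1
  have Ψ := (sm_const (O := O) (2 * R)).mul
    (((p1.mul d1).sub (p2.mul ggk)).sub (q.mul kkk))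
  have i3 := ((sm_const 2100).mul ((hz.pow 5).mul (((g.pow 2).add (k.pow 2)).add
    ((g1.pow 2).add (k1.pow 2))))).lineInt
    (A := t - b) (B := t + b) (by linarith) hl
  refine line_le (by linarith) hO ((hz.pow 6).mul Ψ) hl
    (by simp [zt_left]) (by simp [zt_right]) (i1.add i2) i3 ?_
  intro x hx
  have hzO := hl x hx
  obtain ⟨z0, z1, zx, -⟩ := zt_bounds h.hb0 h.hb1 (h.box (z := (x, 0))
    ⟨⟨hx.1, le_rfl⟩, ⟨hx.2, hb0.le⟩⟩)
  rw [dX_mul (hz.pow 6) Ψ hO hzO, dX_pow hz 6 hO hzO,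
    dX_mul (sm_const (2 * R)) (((p1.mul d1).sub (p2.mul ggk)).sub (q.mul kkk)) hO hzO,
    dX_sub ((p1.mul d1).sub (p2.mul ggk)) (q.mul kkk) hO hzO,
    dX_sub (p1.mul d1) (p2.mul ggk) hO hzO, dX_mul p1 d1 hO hzO, dX_mul p2 ggk hO hzO,
    dX_mul q kkk hO hzO, dX_mul g g1 hO hzO, dX_mul k k1 hO hzO, dX_mul x1 q hO hzO,
    dX_sub (sm_const (R ^ 2)) (x1.pow 2) hO hzO, dX_mul (sm_const 2) (x1.pow 2) hO hzO,
    dX_pow x1 2 hO hzO, dX_sub (g1.pow 2) (k1.pow 2) hO hzO, dX_pow g1 2 hO hzO,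
    dX_pow k1 2 hO hzO, dX_const, dX_const, dX_const, dX_fst,
    h.n_f1x h.hN h.hNO h.haN (h.hln x hx), h'.n_f1x h'.hN h'.hNO h'.haN (h'.hln x hx),
    h.n_w1 h.hN h.hNO h.haN (h.hln x hx), h'.n_w1 h'.hN h'.hNO h'.haN (h'.hln x hx)]
  rw [(m.m0 x hx).1, (m.m0 x hx).2, (m.m1 x hx).1, (m.m1 x hx).2, (m.m2 x hx).1, (m.m2 x hx).2]
  have := alg1 (ζ := zt t b (x, 0)) (ζx := dX (zt t b) (x, 0)) (x := x) (R := R)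
    (g := dX u (x, 0)) (k := dY u (x, 0)) (g1 := dX (dX u) (x, 0)) (k1 := dX (dY u) (x, 0))
    (g2 := dX (dX (dX u)) (x, 0)) (k2 := dX (dX (dY u)) (x, 0))
    z0 z1 zx (h.absx hx) h.hR1 h.hR2
  push_cast
  norm_num
  rw [← sub_nonneg] at this ⊢
  refine this.trans_eq ?_
  ring

lemma level0 (h : NHalf O N a u Λ R t b) (h' : NHalf O' N' a' u' Λ R t b) (m : Match u u' t b)
    {M : ℝ} (hM : En t b 2 u ≤ M) (hM' : En t b 2 u' ≤ M) :
    En t b 4 (Xop R u) + En t b 4 (Xop R u') ≤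
      2 * (800 * Λ * (13 * Λ ^ 2 * (6 + Λ ^ 2)) * (400 * Λ) * M + 3328 * Λ ^ 2 * M) := by
  have hΛ := h.hΛ
  have hR1 := h.hR1
  have e := h.energyX 2
  have e' := h'.energyX 2
  norm_num at e e'
  have B := mul_le_mul_of_nonneg_left (bdry0 h h' m) (show 0 ≤ 2 * Λ by positivity)
  have hθ : (0 : ℝ) < 1 / (800 * Λ) := by positivity
  have L := h.line0 le_rfl h.hb0.le h.hln (by linarith) hθ
    (by rw [div_le_one (by positivity)]; linarith)
  have L2 := mul_le_mul_of_nonneg_left L (show 0 ≤ 2 * Λ * 50 by positivity)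
  have n1 := h.En_nonneg 4 (Xop R u)
  have n2 := h'.En_nonneg 4 (Xop R u')
  have n3 := h.En_nonneg 2 u
  have hM0 := n3.trans hM
  have key : 2 * Λ * 50 * (4 * (13 * Λ ^ 2 * (6 + Λ ^ 2) / (1 / (800 * Λ)) * En t b 2 u
      + 1 / (800 * Λ) * En t b 4 (Xop R u))) =
      400 * Λ * (13 * Λ ^ 2 * (6 + Λ ^ 2)) * (800 * Λ) * En t b 2 u
      + 1 / 2 * En t b 4 (Xop R u) := by
    field_simp; ring
  have g1 : 400 * Λ * (13 * Λ ^ 2 * (6 + Λ ^ 2)) * (800 * Λ) * En t b 2 u ≤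
    400 * Λ * (13 * Λ ^ 2 * (6 + Λ ^ 2)) * (800 * Λ) * M := by gcongr
  have g2 : Λ ^ 2 * En t b 2 u ≤ Λ ^ 2 * M := by gcongr
  have g3 : Λ ^ 2 * En t b 2 u' ≤ Λ ^ 2 * M := by gcongr
  linarith

lemma level1 (h : NHalf O N a u Λ R t b) (h' : NHalf O' N' a' u' Λ R t b) (m : Match u u' t b)
    {M : ℝ} (hM : En t b 2 u ≤ M) (hM' : En t b 2 u' ≤ M) {M1 : ℝ}
    (h1 : En t b 4 (Xop R u) + En t b 4 (Xop R u') ≤ M1) :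
    En t b 6 (Xop R (Xop R u)) + En t b 6 (Xop R (Xop R u')) ≤
      2 * (4200 * Λ * (36 * (13 * Λ ^ 2 * (6 + Λ ^ 2) * M + M1) +
        32 * (13 * Λ ^ 2 * (10 + Λ ^ 2) * (268800 * Λ) * M1)) + 3744 * Λ ^ 2 * M1) := by
  have hΛ := h.hΛ
  have hR1 := h.hR1
  have e := h.next.energyX 4
  have e' := h'.next.energyX 4
  norm_num at e e'
  have B := mul_le_mul_of_nonneg_left (bdry1 h h' m) (show 0 ≤ 2 * Λ by positivity)
  have hθ : (0 : ℝ) < 1 / (268800 * Λ) := by positivity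
  have L := h.line1 le_rfl h.hb0.le h.hln (by linarith) hθ
    (by rw [div_le_one (by positivity)]; linarith)
  have L2 := mul_le_mul_of_nonneg_left L (show 0 ≤ 2 * Λ * 2100 by positivity)
  have n1 := h.En_nonneg 4 (Xop R u)
  have n2 := h'.En_nonneg 4 (Xop R u')
  have n4 := h.En_nonneg 6 (Xop R (Xop R u))
  have n5 := h'.En_nonneg 6 (Xop R (Xop R u'))
  have key : 2 * Λ * 2100 * (36 * (13 * Λ ^ 2 * (6 + Λ ^ 2) * En t b 2 u + En t b 4 (Xop R u)) +
      32 * (13 * Λ ^ 2 * (10 + Λ ^ 2) / (1 / (268800 * Λ)) * En t b 4 (Xop R u)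
        + 1 / (268800 * Λ) * En t b 6 (Xop R (Xop R u)))) =
      4200 * Λ * (36 * (13 * Λ ^ 2 * (6 + Λ ^ 2) * En t b 2 u + En t b 4 (Xop R u)) +
      32 * (13 * Λ ^ 2 * (10 + Λ ^ 2) * (268800 * Λ) * En t b 4 (Xop R u)))
        + 1 / 2 * En t b 6 (Xop R (Xop R u)) := by
    field_simp; ring
  have q1 : En t b 4 (Xop R u) ≤ M1 := by linarith
  have g1 : 4200 * Λ * (36 * (13 * Λ ^ 2 * (6 + Λ ^ 2) * En t b 2 u + En t b 4 (Xop R u)) +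
      32 * (13 * Λ ^ 2 * (10 + Λ ^ 2) * (268800 * Λ) * En t b 4 (Xop R u))) ≤
    4200 * Λ * (36 * (13 * Λ ^ 2 * (6 + Λ ^ 2) * M + M1) +
      32 * (13 * Λ ^ 2 * (10 + Λ ^ 2) * (268800 * Λ) * M1)) := by gcongr
  have g2 : Λ ^ 2 * (En t b 4 (Xop R u) + En t b 4 (Xop R u')) ≤ Λ ^ 2 * M1 := by gcongr
  linarith

/-- constants -/
noncomputable def K1 (Λ : ℝ) : ℝ :=
  2 * (800 * Λ * (13 * Λ ^ 2 * (6 + Λ ^ 2)) * (400 * Λ) * (128 * Λ ^ 2) + 3328 * Λ ^ 2 * (128 * Λ ^ 2))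
noncomputable def K2 (Λ : ℝ) : ℝ :=
  2 * (4200 * Λ * (36 * (13 * Λ ^ 2 * (6 + Λ ^ 2) * (128 * Λ ^ 2) + K1 Λ) +
        32 * (13 * Λ ^ 2 * (10 + Λ ^ 2) * (268800 * Λ) * K1 Λ)) + 3744 * Λ ^ 2 * K1 Λ)
noncomputable def K3 (Λ : ℝ) : ℝ :=
  13 * (36 * (13 * Λ ^ 2 * (6 + Λ ^ 2) * (128 * Λ ^ 2) + K1 Λ) +
      32 * (13 * Λ ^ 2 * (10 + Λ ^ 2) * K1 Λ + K2 Λ))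

lemma core (h : NHalf O N a u Λ R t b) (h' : NHalf O' N' a' u' Λ R t b) (m : Match u u' t b)
    (hM : En t b 2 u ≤ 128 * Λ ^ 2) (hM' : En t b 2 u' ≤ 128 * Λ ^ 2) {y₀ : ℝ} (hy0 : 0 ≤ y₀)
    (hyb : y₀ ≤ b)
    (hl : ∀ x ∈ Icc (t - b) (t + b), (x, y₀) ∈ N) (hyR : 1 / 2 ≤ R - y₀) :
    zt t b (t, y₀) ^ 6 * (dX u (t, y₀) ^ 2 + dY u (t, y₀) ^ 2) ≤ K3 Λ := by
  have hΛ := h.hΛ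
  have l0 : _ ≤ K1 Λ := level0 h h' m hM hM'
  have l1 : _ ≤ K2 Λ := level1 h h' m hM hM' l0
  refine (h.pt hy0 hyb hl hyR).trans ?_
  have n1 := h.En_nonneg 4 (Xop R u)
  have n2 := h'.En_nonneg 4 (Xop R u')
  have n4 := h.En_nonneg 6 (Xop R (Xop R u))
  have n5 := h'.En_nonneg 6 (Xop R (Xop R u'))
  have q1 : En t b 4 (Xop R u) ≤ K1 Λ := by linarith
  have q2 : En t b 6 (Xop R (Xop R u)) ≤ K2 Λ := by linarith
  unfold K3
  gcongr

end Neck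

namespace Neck

/-- reflection -/
noncomputable def rho : (ℝ × ℝ) ≃L[ℝ] (ℝ × ℝ) :=
  (ContinuousLinearEquiv.refl ℝ ℝ).prodCongr (ContinuousLinearEquiv.neg ℝ)

lemma rho_apply (z : ℝ × ℝ) : rho z = (z.1, -z.2) := rfl
lemma rho_rho (z : ℝ × ℝ) : rho (rho z) = z := by simp [rho_apply]

noncomputable def rf (u : ℝ × ℝ → ℝ) (z : ℝ × ℝ) : ℝ := u (rho z)

lemma dX_rf (u : ℝ × ℝ → ℝ) : dX (rf u) = rf (dX u) := by
  funext z
  show fderiv ℝ (u ∘ rho) z (1, 0) = fderiv ℝ u (rho z) (1, 0)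
  rw [ContinuousLinearEquiv.comp_right_fderiv]
  simp [rho_apply]

lemma dX_neg (u : ℝ × ℝ → ℝ) : dX (fun z => -u z) = fun z => - dX u z := by
  funext z
  unfold dX
  rw [fderiv_fun_neg]; rfl

lemma dY_neg (u : ℝ × ℝ → ℝ) : dY (fun z => -u z) = fun z => - dY u z := by
  funext z
  unfold dY
  rw [fderiv_fun_neg]; rfl

lemma dY_rf (u : ℝ × ℝ → ℝ) : dY (rf u) = fun z => - rf (dY u) z := by
  funext z
  show fderiv ℝ (u ∘ rho) z (0, 1) = - fderiv ℝ u (rho z) (0, 1)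
  rw [ContinuousLinearEquiv.comp_right_fderiv]
  rw [← map_neg]
  simp [rho_apply]

lemma match_rf (u : ℝ × ℝ → ℝ) (t b : ℝ) : Match u (rf u) t b := by
  have e : ∀ (F : ℝ × ℝ → ℝ) (x : ℝ), rf F (x, 0) = F (x, 0) := fun F x => by
    simp [rf, rho_apply]
  refine ⟨fun x _ => ?_, fun x _ => ?_, fun x _ => ?_⟩ <;>
    simp [dX_rf, dY_rf, dX_neg, e]

variable {U : Set (ℝ × ℝ)} {a u : ℝ × ℝ → ℝ} {Λ R e t b : ℝ}

lemma Sm.rf (h : Sm U u) : Sm (rho ⁻¹' U) (rf u) :=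
  ContDiffOn.comp (g := u) (f := rho) h rho.contDiff.contDiffOn (fun _ hz => hz)

lemma Sol.rf (h : Sol U a u Λ) : Sol (rho ⁻¹' U) (rf a) (rf u) Λ := by
  refine ⟨h.hO.preimage rho.continuous, h.ha.rf, h.hu.rf, ?_, fun z hz => h.lo _ hz,
    fun z hz => h.hi _ hz, h.hΛ⟩
  intro z hz
  have := h.pde _ hz
  simp only [dX_rf, dY_rf, dY_neg, neg_neg, neg_mul_neg]
  exact this

lemma En_le (h : Sol U a u Λ) (hb0 : 0 < b) (hb1 : b ≤ 1)
    (hbox : Icc (t - b, -b) (t + b, b) ⊆ U)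
    (hu1 : ∀ z ∈ Icc (t - b, -b) (t + b, b), |u z| ≤ 1) : En t b 2 u ≤ 128 * Λ ^ 2 := by
  have e := h.energy hb0 hb1 le_rfl (by linarith) hbox 0
  have hO := h.hO
  simp only [zt_bot] at e
  norm_num at e
  have hz := zt_sm (O := U) t b
  have m := int_mono_set ((hz.pow 2).mul (((h.hu.dX hO).pow 2).add ((h.hu.dY hO).pow 2))) hbox
    (p' := (t - b, 0)) (q' := (t + b, b))
    (Icc_subset_Icc ⟨le_rfl, by simp only; linarith⟩ le_rfl) (fun z hz => by positivity)
  have i : ∫ z in Icc (t - b, -b) (t + b, b), u z ^ 2 ≤ 4 := by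
    have i1 := int_mono (h.hu.pow 2) (sm_const 1) hbox (fun z hz => by
      have := abs_le.1 (hu1 z hz)
      nlinarith)
    refine i1.trans ?_
    rw [setIntegral_const, smul_eq_mul, mul_one, ← Icc_prod_Icc, Measure.real, Measure.volume_eq_prod,
      Measure.prod_prod, Real.volume_Icc, Real.volume_Icc, ENNReal.toReal_mul,
      ENNReal.toReal_ofReal (by linarith), ENNReal.toReal_ofReal (by linarith)]
    nlinarith
  have := mul_le_mul_of_nonneg_left i (show 0 ≤ 32 * Λ ^ 2 by positivity)
  unfold En
  linarith

/-- full data on both sides of the neck -/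
structure Full (U : Set (ℝ × ℝ)) (a u : ℝ × ℝ → ℝ) (Λ R e t b : ℝ) : Prop extends Sol U a u Λ where
  he : 0 < e
  hb0 : 0 < b
  hb1 : b ≤ 1
  ht : |t| ≤ 2
  hR1 : 1 ≤ R
  hR2 : R ≤ 2
  hbox : Icc (t - b, -b) (t + b, b) ⊆ U
  hu1 : ∀ z ∈ Icc (t - b, -b) (t + b, b), |u z| ≤ 1
  one : ∀ z ∈ U, |z.2| < e → a z = 1
  radp : ∀ z ∈ U, -e < z.2 → z.1 * dY a z = (z.2 - R) * dX a z
  radm : ∀ z ∈ U, z.2 < e → z.1 * dY a z = (z.2 + R) * dX a z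

lemma Full.rf (h : Full U a u Λ R e t b) : Full (rho ⁻¹' U) (rf a) (rf u) Λ R e t b := by
  have hb : ∀ z ∈ Icc (t - b, -b) (t + b, b), rho z ∈ Icc (t - b, -b) (t + b, b) := by
    rintro ⟨x, y⟩ ⟨⟨h1, h2⟩, h3, h4⟩
    simp only at h1 h2 h3 h4
    exact ⟨⟨h1, by simp only [rho_apply]; linarith⟩, h3, by simp only [rho_apply]; linarith⟩
  refine ⟨h.toSol.rf, h.he, h.hb0, h.hb1, h.ht, h.hR1, h.hR2, fun z hz => h.hbox (hb z hz),
    fun z hz => h.hu1 _ (hb z hz), fun z hz hy => h.one _ hz (by simpa [rho_apply] using hy), ?_, ?_⟩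
  · intro z hz hy
    have := h.radm _ hz (by simp only [rho_apply]; linarith)
    rw [dX_rf, dY_rf]
    simp only [Neck.rf]
    simp only [rho_apply] at this ⊢
    linarith
  · intro z hz hy
    have := h.radp _ hz (by simp only [rho_apply]; linarith)
    rw [dX_rf, dY_rf]
    simp only [Neck.rf]
    simp only [rho_apply] at this ⊢
    linarith

lemma Sol.mono {V : Set (ℝ × ℝ)} (h : Sol U a u Λ) (hV : IsOpen V) (hs : V ⊆ U) : Sol V a u Λ :=
  ⟨hV, h.ha.mono hs, h.hu.mono hs, fun z hz => h.pde z (hs hz), fun z hz => h.lo z (hs hz),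
    fun z hz => h.hi z (hs hz), h.hΛ⟩

lemma Full.half (h : Full U a u Λ R e t b) :
    NHalf (U ∩ {z | -e < z.2}) (U ∩ {z | |z.2| < e}) a u Λ R t b := by
  have he := h.he
  have hb0 := h.hb0
  have o1 : IsOpen (U ∩ {z : ℝ × ℝ | -e < z.2}) := h.hO.inter (isOpen_lt (by fun_prop) (by fun_prop))
  have o2 : IsOpen (U ∩ {z : ℝ × ℝ | |z.2| < e}) :=
    h.hO.inter (isOpen_lt (by fun_prop) (by fun_prop))
  refine ⟨⟨h.toSol.mono o1 inter_subset_left, fun z hz => h.radp z hz.1 hz.2⟩, o2,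
    fun z hz => ⟨hz.1, (abs_lt.1 (show |z.2| < e from hz.2)).1⟩, fun z hz => h.one z hz.1 hz.2, ?_, ?_, h.hb0, h.hb1, h.ht,
    h.hR1, h.hR2⟩
  · intro z hz
    have : (0 : ℝ) ≤ z.2 := hz.1.2
    exact ⟨h.hbox ⟨⟨hz.1.1, by simp only; linarith⟩, hz.2⟩, by simp only [mem_ofPred_eq]; linarith⟩
  · intro x hx
    refine ⟨h.hbox ⟨⟨hx.1, by simp only; linarith⟩, hx.2, by simp only; linarith⟩, ?_⟩
    simpa using he

lemma Full.bound_nonneg (h : Full U a u Λ R e t b) {y₀ : ℝ} (hy0 : 0 ≤ y₀) (hyb : y₀ ≤ b)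
    (hye : y₀ < e) (hyR : 1 / 2 ≤ R - y₀) :
    zt t b (t, y₀) ^ 6 * (dX u (t, y₀) ^ 2 + dY u (t, y₀) ^ 2) ≤ K3 Λ := by
  have hb0 := h.hb0
  refine core h.half h.rf.half (match_rf u t b) (En_le h.toSol h.hb0 h.hb1 h.hbox h.hu1)
    (En_le h.rf.toSol h.hb0 h.hb1 h.rf.hbox h.rf.hu1) hy0 hyb ?_ hyR
  intro x hx
  exact ⟨h.hbox ⟨⟨hx.1, by simp only; linarith⟩, hx.2, hyb⟩, by
    simp only [mem_ofPred_eq]; rwa [abs_of_nonneg hy0]⟩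

lemma Full.bound (h : Full U a u Λ R e t b) {y₀ : ℝ} (hyb : |y₀| ≤ b)
    (hye : |y₀| < e) (hyR : 1 / 2 ≤ R - |y₀|) :
    zt t b (t, y₀) ^ 6 * (dX u (t, y₀) ^ 2 + dY u (t, y₀) ^ 2) ≤ K3 Λ := by
  rcases le_total 0 y₀ with h0 | h0
  · rw [abs_of_nonneg h0] at *
    exact h.bound_nonneg h0 hyb hye hyR
  · rw [abs_of_nonpos h0] at *
    have := h.rf.bound_nonneg (y₀ := -y₀) (by linarith) hyb hye hyR
    rw [dX_rf, dY_rf] at this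
    simp only [Neck.rf, rho_apply, neg_neg, neg_sq] at this
    have e : zt t b (t, -y₀) = zt t b (t, y₀) := by simp [zt]
    rwa [e] at this

end Neck

namespace Neck

lemma second_test {f : ℝ → ℝ} {x : ℝ} (h : IsLocalMax f x) (hc : ContinuousAt f x) :
    deriv (deriv f) x ≤ 0 := by
  by_contra hcon
  push Not at hcon
  have hm := isLocalMin_of_deriv_deriv_pos hcon h.deriv_eq_zero hc
  have he : f =ᶠ[nhds x] fun _ => f x := by
    filter_upwards [h, hm] with y h1 h2 using le_antisymm h1 h2
  have : deriv (deriv f) x = 0 := by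
    rw [he.deriv.deriv_eq]; simp
  linarith

variable {U : Set (ℝ × ℝ)} {a u v : ℝ × ℝ → ℝ} {Λ : ℝ}

lemma Sm.maxX (hv : Sm U v) (hU : IsOpen U) {z : ℝ × ℝ} (hz : z ∈ U) (h : IsLocalMax v z) :
    Neck.dX v z = 0 ∧ Neck.dX (Neck.dX v) z ≤ 0 := by
  obtain ⟨x, y⟩ := z
  have hd := hv.hasX hU hz
  have hcont : ContinuousAt (fun s : ℝ => (s, y)) x := by fun_prop
  have hl : IsLocalMax (fun s => v (s, y)) x := hcont.tendsto.eventually h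
  have e : deriv (fun s => v (s, y)) =ᶠ[nhds x] fun s => Neck.dX v (s, y) := by
    filter_upwards [hcont.tendsto.eventually (hU.mem_nhds hz)] with s hs
    exact (hv.hasX hU hs).deriv
  have := second_test hl hd.continuousAt
  rw [e.deriv_eq, ((hv.dX hU).hasX hU hz).deriv] at this
  exact ⟨by rw [← hd.deriv]; exact hl.deriv_eq_zero, this⟩

lemma Sm.maxY (hv : Sm U v) (hU : IsOpen U) {z : ℝ × ℝ} (hz : z ∈ U) (h : IsLocalMax v z) :
    Neck.dY v z = 0 ∧ Neck.dY (Neck.dY v) z ≤ 0 := by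
  obtain ⟨x, y⟩ := z
  have hd := hv.hasY hU hz
  have hcont : ContinuousAt (fun s : ℝ => (x, s)) y := by fun_prop
  have hl : IsLocalMax (fun s => v (x, s)) y := hcont.tendsto.eventually h
  have e : deriv (fun s => v (x, s)) =ᶠ[nhds y] fun s => Neck.dY v (x, s) := by
    filter_upwards [hcont.tendsto.eventually (hU.mem_nhds hz)] with s hs
    exact (hv.hasY hU hs).deriv
  have := second_test hl hd.continuousAt
  rw [e.deriv_eq, ((hv.dY hU).hasY hU hz).deriv] at this
  exact ⟨by rw [← hd.deriv]; exact hl.deriv_eq_zero, this⟩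

/-- exponential barrier -/
noncomputable def ex (l : ℝ) (z : ℝ × ℝ) : ℝ := Real.exp (l * z.1)

lemma ex_sm (l : ℝ) : Sm U (ex l) := by
  have : ContDiff ℝ ∞ (ex l) := by unfold ex; fun_prop
  exact this.contDiffOn

lemma dX_ex (l : ℝ) (z : ℝ × ℝ) : dX (ex l) z = l * ex l z := by
  obtain ⟨x, y⟩ := z
  refine ((ex_sm (U := univ) l).hasX isOpen_univ (mem_univ (x, y))).unique ?_
  have := ((hasDerivAt_id x).const_mul l).exp
  simp only [id, mul_one] at this
  unfold ex
  simp only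
  rwa [mul_comm l (Real.exp (l * x))]

lemma dY_ex (l : ℝ) (z : ℝ × ℝ) : dY (ex l) z = 0 := by
  obtain ⟨x, y⟩ := z
  refine ((ex_sm (U := univ) l).hasY isOpen_univ (mem_univ (x, y))).unique ?_
  exact hasDerivAt_const y (Real.exp (l * x))

lemma maxp (h : Sol U a u Λ) (hK : IsCompact (closure U)) (hc : ContinuousOn u (closure U))
    (hf : ∀ z ∈ frontier U, u z ≤ 1) : ∀ z ∈ U, u z ≤ 1 := by
  by_contra hcon
  push Not at hcon
  obtain ⟨z0, hz0, h0⟩ := hcon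
  have hO := h.hO
  have hΛ := h.hΛ
  obtain ⟨zm, hzm, hmax⟩ := hK.exists_isMaxOn ⟨z0, subset_closure hz0⟩ hc
  set M := u zm with hMdef
  have hM : 1 < M := lt_of_lt_of_le h0 (hmax (subset_closure hz0))
  set c := (M + 1) / 2 with hcdef
  set K := closure U ∩ u ⁻¹' (Ici c) with hKdef
  have hKc : IsCompact K := by
    apply hK.of_isClosed_subset _ inter_subset_left
    exact hc.preimage_isClosed_of_isClosed isClosed_closure isClosed_Ici
  have hKU : K ⊆ U := by
    rintro z ⟨hz, hz2⟩
    by_contra hzU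
    have : z ∈ frontier U := by rw [hO.frontier_eq]; exact ⟨hz, hzU⟩
    have h1 := hf z this
    have h2 : c ≤ u z := hz2
    linarith
  obtain ⟨L, hL⟩ := hKc.exists_bound_of_continuousOn ((h.ha.dX hO).cont.mono hKU)
  set l := Λ * (|L| + 1) with hl
  have hlpos : 0 < l := by positivity
  obtain ⟨B, hB⟩ := hK.exists_bound_of_continuousOn (f := ex l)
    (by unfold ex; fun_prop : Continuous (ex l)).continuousOn
  have hex : ∀ z, 0 < ex l z := fun z => Real.exp_pos _
  have hBpos : 0 < B := by
    have := hB z0 (subset_closure hz0)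
    rw [Real.norm_eq_abs] at this
    exact lt_of_lt_of_le (abs_pos.2 (hex z0).ne') this
  set τ := (M - c) / B with hτ
  have hτpos : 0 < τ := div_pos (by linarith) hBpos
  have hvc : ContinuousOn (fun z => u z + τ * ex l z) (closure U) :=
    hc.add ((continuous_const.mul (by unfold ex; fun_prop : Continuous (ex l))).continuousOn)
  obtain ⟨z1, hz1, hmax1⟩ := hK.exists_isMaxOn ⟨z0, subset_closure hz0⟩ hvc
  have hz1K : z1 ∈ K := by
    refine ⟨hz1, ?_⟩
    have q1 : u zm + τ * ex l zm ≤ u z1 + τ * ex l z1 := hmax1 hzm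
    have q2 := hB z1 hz1
    rw [Real.norm_eq_abs, abs_of_pos (hex z1)] at q2
    have q3 : τ * ex l z1 ≤ τ * B := by gcongr
    have q4 : τ * B = M - c := by rw [hτ]; field_simp
    have q5 := mul_pos hτpos (hex zm)
    show c ≤ u z1
    linarith
  have hz1U := hKU hz1K
  have hloc : IsLocalMax (fun z => u z + τ * ex l z) z1 :=
    hmax1.isLocalMax (Filter.mem_of_superset (hO.mem_nhds hz1U) subset_closure)
  have he : Sm U (fun z => τ * ex l z) := (sm_const τ).mul (ex_sm l)
  have hv := h.hu.add he
  obtain ⟨x1, x2⟩ := hv.maxX hO hz1U hloc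
  obtain ⟨y1, y2⟩ := hv.maxY hO hz1U hloc
  have ex1 : ∀ z ∈ U, dX (fun z => u z + τ * ex l z) z = dX u z + τ * (l * ex l z) := by
    intro z hz
    rw [dX_add h.hu he hO hz, dX_mul (sm_const τ) (ex_sm l) hO hz, dX_const, dX_ex]; ring
  have ey1 : ∀ z ∈ U, dY (fun z => u z + τ * ex l z) z = dY u z := by
    intro z hz
    rw [dY_add h.hu he hO hz, dY_mul (sm_const τ) (ex_sm l) hO hz, dY_const, dY_ex]; ring
  have sl : Sm U (fun z => l * ex l z) := (sm_const l).mul (ex_sm l)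
  rw [dX_congr hO ex1 hz1U, dX_add (h.hu.dX hO) ((sm_const τ).mul sl) hO hz1U,
    dX_mul (sm_const τ) sl hO hz1U, dX_mul (sm_const l) (ex_sm l) hO hz1U, dX_const, dX_const,
    dX_ex] at x2
  rw [dY_congr hO ey1 hz1U] at y2
  rw [ex1 z1 hz1U] at x1
  rw [ey1 z1 hz1U] at y1
  have p := h.pde z1 hz1U
  have ap := h.apos hz1U
  have q : |dX a z1| ≤ |L| := by
    have := hL z1 hz1K
    rw [Real.norm_eq_abs] at this
    exact this.trans (le_abs_self L)
  have r : 0 < a z1 * l + dX a z1 := by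
    have s1 : |L| + 1 ≤ a z1 * l := by
      have := mul_le_mul_of_nonneg_right (h.lo z1 hz1U) (show 0 ≤ |L| + 1 by positivity)
      rw [hl]; linarith
    linarith [(abs_le.1 q).1]
  have s := mul_pos (mul_pos hτpos (mul_pos hlpos (hex z1))) r
  have t1 : a z1 * (dX (dX u) z1 + τ * (l * (l * ex l z1)) + dY (dY u) z1) ≤ 0 := by
    apply mul_nonpos_of_nonneg_of_nonpos ap.le
    linarith
  have x1' : dX u z1 = - (τ * (l * ex l z1)) := by linarith
  rw [y1, x1'] at p
  linarith

lemma Sol.neg (h : Sol U a u Λ) : Sol U a (fun z => -u z) Λ := by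
  refine ⟨h.hO, h.ha, ContDiffOn.neg h.hu, ?_, h.lo, h.hi, h.hΛ⟩
  intro z hz
  have := h.pde z hz
  rw [dX_neg, dY_neg, dX_neg, dY_neg]
  linarith

lemma maxp_abs (h : Sol U a u Λ) (hK : IsCompact (closure U)) (hc : ContinuousOn u (closure U))
    (hf : ∀ z ∈ frontier U, |u z| ≤ 1) : ∀ z ∈ U, |u z| ≤ 1 := by
  intro z hz
  have h1 := maxp h hK hc (fun z hz => (abs_le.1 (hf z hz)).2) z hz
  have h2 := maxp h.neg hK hc.neg (fun z hz => by linarith [(abs_le.1 (hf z hz)).1]) z hz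
  exact abs_le.2 ⟨by linarith, h1⟩

end Neck

namespace Neck

abbrev E2 := EuclideanSpace ℝ (Fin 2)

noncomputable def Llin : (ℝ × ℝ) ≃ₗ[ℝ] E2 where
  toFun z := !₂[z.1, z.2]
  invFun x := (x 0, x 1)
  map_add' z w := by ext i; fin_cases i <;> simp
  map_smul' c z := by ext i; fin_cases i <;> simp
  left_inv z := by simp
  right_inv x := by ext i; fin_cases i <;> simp

noncomputable def Lc : (ℝ × ℝ) ≃L[ℝ] E2 := Llin.toContinuousLinearEquiv

lemma Lc_apply (z : ℝ × ℝ) : Lc z = !₂[z.1, z.2] := rfl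

noncomputable def eh (δ : ℝ) : (ℝ × ℝ) ≃ₜ E2 :=
  Lc.toHomeomorph.trans (Homeomorph.addRight (!₂[0, -1 - δ] : E2))

lemma eh_eq (δ : ℝ) (z : ℝ × ℝ) : eh δ z = Lc z + !₂[0, -1 - δ] := rfl

lemma eh_zero (δ : ℝ) (z : ℝ × ℝ) : eh δ z 0 = z.1 := by simp [eh_eq, Lc_apply]
lemma eh_one (δ : ℝ) (z : ℝ × ℝ) : eh δ z 1 = z.2 - 1 - δ := by simp [eh_eq, Lc_apply]; ring

lemma dX_eh (δ : ℝ) (F : E2 → ℝ) : dX (fun z => F (eh δ z)) = fun z => pd 0 F (eh δ z) := by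
  funext z
  show fderiv ℝ ((fun w => F (w + !₂[0, -1 - δ])) ∘ Lc) z (1, 0) = _
  rw [ContinuousLinearEquiv.comp_right_fderiv, fderiv_comp_add_right]
  show fderiv ℝ F (eh δ z) (Lc (1, 0)) = _
  have : Lc (1, 0) = EuclideanSpace.single 0 1 := by
    rw [Lc_apply]; ext i; fin_cases i <;> simp
  rw [this]; rfl

lemma dY_eh (δ : ℝ) (F : E2 → ℝ) : dY (fun z => F (eh δ z)) = fun z => pd 1 F (eh δ z) := by
  funext z
  show fderiv ℝ ((fun w => F (w + !₂[0, -1 - δ])) ∘ Lc) z (0, 1) = _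
  rw [ContinuousLinearEquiv.comp_right_fderiv, fderiv_comp_add_right]
  show fderiv ℝ F (eh δ z) (Lc (0, 1)) = _
  have : Lc (0, 1) = EuclideanSpace.single 1 1 := by
    rw [Lc_apply]; ext i; fin_cases i <;> simp
  rw [this]; rfl

lemma eh_contDiff (δ : ℝ) : ContDiff ℝ ∞ (eh δ) := by
  show ContDiff ℝ ∞ (fun z => Lc z + !₂[0, -1 - δ])
  exact Lc.contDiff.add contDiff_const

lemma sm_eh {Ω : Set E2} {F : E2 → ℝ} (δ : ℝ) (hF : ContDiffOn ℝ (⊤ : ℕ∞) F Ω) :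
    Sm (eh δ ⁻¹' Ω) (fun z => F (eh δ z)) :=
  ContDiffOn.comp (g := F) (f := eh δ) hF (eh_contDiff δ).contDiffOn (fun _ hz => hz)

lemma norm_eh (δ : ℝ) (z : ℝ × ℝ) : ‖eh δ z‖ = √(z.1 ^ 2 + (z.2 - (1 + δ)) ^ 2) := by
  rw [EuclideanSpace.norm_eq, Fin.sum_univ_two, eh_zero, eh_one]
  simp only [Real.norm_eq_abs, sq_abs]
  congr 2; ring

lemma dist_eh_ctr (δ : ℝ) (z : ℝ × ℝ) :
    dist (eh δ z) (ctr δ) = √(z.1 ^ 2 + (z.2 + (1 + δ)) ^ 2) := by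
  rw [EuclideanSpace.dist_eq, Fin.sum_univ_two, eh_zero, eh_one]
  simp only [Real.dist_eq, sq_abs, ctr]
  simp
  congr 2; ring

lemma dist_eh (δ : ℝ) (z w : ℝ × ℝ) :
    dist (eh δ z) (eh δ w) = √((z.1 - w.1) ^ 2 + (z.2 - w.2) ^ 2) := by
  rw [EuclideanSpace.dist_eq, Fin.sum_univ_two, eh_zero, eh_one, eh_zero, eh_one]
  simp only [Real.dist_eq, sq_abs]
  congr 2; ring

/-- radial functions have vanishing angular derivative -/
lemma radial {O : Set (ℝ × ℝ)} {a : ℝ × ℝ → ℝ} (hO : IsOpen O) (ha : Sm O a) {c : ℝ} {G : ℝ → ℝ}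
    (hG : ∀ z ∈ O, a z = G (z.1 ^ 2 + (z.2 - c) ^ 2)) {z : ℝ × ℝ} (hz : z ∈ O) :
    z.1 * dY a z = (z.2 - c) * dX a z := by
  obtain ⟨x, y⟩ := z
  simp only
  set γ : ℝ → ℝ × ℝ := fun s => (x * Real.cos s - (y - c) * Real.sin s,
    c + (x * Real.sin s + (y - c) * Real.cos s)) with hγ
  have γ0 : γ 0 = (x, y) := by simp [hγ]
  have hd : HasDerivAt γ (-(y - c), x) 0 := by
    have h1 := ((Real.hasDerivAt_cos 0).const_mul x).sub ((Real.hasDerivAt_sin 0).const_mul (y - c))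
    have h2 := (((Real.hasDerivAt_sin 0).const_mul x).add
      ((Real.hasDerivAt_cos 0).const_mul (y - c))).const_add c
    have := h1.prodMk h2
    simpa using this
  have hF : HasFDerivAt a (fderiv ℝ a (x, y)) (γ 0) := by rw [γ0]; exact ha.hasF hO hz
  have hcomp := hF.comp_hasDerivAt (0 : ℝ) hd
  have hev : (a ∘ γ) =ᶠ[nhds 0] fun _ => a (x, y) := by
    have : ∀ᶠ s in nhds (0 : ℝ), γ s ∈ O := by
      apply hd.continuousAt.tendsto.eventually
      rw [γ0]; exact hO.mem_nhds hz
    filter_upwards [this] with s hs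
    show a (γ s) = _
    rw [hG _ hs, hG _ hz]
    congr 1
    simp only [hγ]
    linear_combination (x ^ 2 + (y - c) ^ 2) * Real.sin_sq_add_cos_sq s
  have h0 := hcomp.unique ((hasDerivAt_const (0 : ℝ) (a (x, y))).congr_of_eventuallyEq hev)
  have e : ((-(y - c), x) : ℝ × ℝ) = (-(y - c)) • ((1 : ℝ), (0 : ℝ)) + x • ((0 : ℝ), (1 : ℝ)) := by
    ext <;> simp
  rw [e, map_add, map_smul, map_smul, smul_eq_mul, smul_eq_mul] at h0
  unfold dX dY
  linarith

lemma ball_sub {Ω : Set E2} (hΩ : IsOpen Ω) {μ : ℝ} {q : E2} (hμ : 0 < μ)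
    (hq : q ∈ innerReg Ω (2 * μ)) : Metric.ball q (2 * μ) ⊆ Ω := by
  have hc : IsPreconnected (Metric.ball q (2 * μ)) := (convex_ball q _).isPreconnected
  refine hc.subset_of_closure_inter_subset hΩ ⟨q, Metric.mem_ball_self (by linarith), hq.1⟩ ?_
  rintro x ⟨hx1, hx⟩
  by_contra hcon
  have hxf : x ∈ frontier Ω := by rw [hΩ.frontier_eq]; exact ⟨hx1, hcon⟩
  have := hq.2
  have h3 := Metric.infDist_le_dist_of_mem (x := q) hxf
  rw [Metric.mem_ball, dist_comm] at hx
  linarith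

lemma near {Ω : Set E2} (hΩ : IsOpen Ω) {μ : ℝ} {c s : E2} (hμ : 0 < μ)
    (hB : closure (Metric.ball c 1) ⊆ innerReg Ω (2 * μ))
    (hs : Metric.infDist s (Metric.sphere c 1) ≤ μ) :
    Metric.ball s μ ⊆ Ω ∧ dist s c ≤ 1 + μ := by
  have hne : (Metric.sphere c 1).Nonempty := NormedSpace.sphere_nonempty.2 zero_le_one
  obtain ⟨q, hq, hd⟩ := (isCompact_sphere c 1).exists_infDist_eq_dist hne s
  rw [hd] at hs
  have hq1 : q ∈ innerReg Ω (2 * μ) := by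
    apply hB
    rw [closure_ball c one_ne_zero]
    exact Metric.sphere_subset_closedBall hq
  constructor
  · refine Subset.trans ?_ (ball_sub hΩ hμ hq1)
    apply Metric.ball_subset_ball'
    linarith
  · have := dist_triangle s q c
    rw [Metric.mem_sphere.1 hq] at this
    linarith

end Neck

namespace Neck

open Classical in
/-- The data of the problem in the flattened coordinates. -/
lemma mkFull {Ω : Set E2} (hΩo : IsOpen Ω) (hΩb : Bornology.IsBounded Ω)
    {μ κp κm : ℝ} (hμ : μ ∈ Ioo (0 : ℝ) 1) (hκp : 0 < κp) (hκm : 0 < κm)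
    {δ ε c₁ t : ℝ} (hδ : 0 < δ) (hε : ε ∈ Ioo 0 (δ / 2))
    (hB : closure Bp ∪ closure (Bm δ) ⊆ innerReg Ω (2 * μ))
    (hS : Sseg c₁ δ ⊆ Wp Ω δ μ ∪ Wm Ω δ μ) (ht : |t| ≤ c₁)
    {φ aε uε : E2 → ℝ} (hφ : ∀ y ∈ frontier Ω, |φ y| ≤ 1)
    (ha : ContDiffOn ℝ (⊤ : ℕ∞) aε Ω)
    (hab : ∀ x ∈ Ω, min 1 (min κp κm) ≤ aε x ∧ aε x ≤ max 1 (max κp κm))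
    (haF : ∀ x ∈ Ω, ε ≤ |‖x‖ - 1| → ε ≤ |dist x (ctr δ) - 1| → aε x = aFun δ κp κm x)
    (hgp : ∃ g : ℝ → ℝ, ∀ x ∈ Ω, |‖x‖ - 1| < ε → aε x = g ‖x‖)
    (hgm : ∃ g : ℝ → ℝ, ∀ x ∈ Ω, |dist x (ctr δ) - 1| < ε → aε x = g (dist x (ctr δ)))
    (hu : ContDiffOn ℝ (⊤ : ℕ∞) uε Ω) (huc : ContinuousOn uε (closure Ω))
    (huφ : EqOn uε φ (frontier Ω))
    (hpde : ∀ x ∈ Ω, aε x * (pd 0 (pd 0 uε) x + pd 1 (pd 1 uε) x)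
          + (pd 0 aε x * pd 0 uε x + pd 1 aε x * pd 1 uε x) = 0) :
    δ ≤ μ ∧ Full (eh δ ⁻¹' Ω) (fun z => aε (eh δ z)) (fun z => uε (eh δ z))
      (max (max 1 (max κp κm)) (1 / min 1 (min κp κm))) (1 + δ) (δ - ε) t (7 * μ / 10) := by
  obtain ⟨hμ0, hμ1⟩ := hμ
  obtain ⟨hε0, hε1⟩ := hε
  have hm : 0 < min 1 (min κp κm) := by positivity
  set Λ := max (max 1 (max κp κm)) (1 / min 1 (min κp κm)) with hΛdef
  have hΛ1 : 1 ≤ Λ := (le_max_left _ _).trans (le_max_left _ _)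
  -- distances
  have hplus : ∀ z : ℝ × ℝ, z.2 < δ - ε → 1 + ε < ‖eh δ z‖ := by
    intro z hz
    rw [norm_eh]
    apply Real.lt_sqrt_of_sq_lt
    nlinarith [sq_nonneg z.1]
  have hminus : ∀ z : ℝ × ℝ, -(δ - ε) < z.2 → 1 + ε < dist (eh δ z) (ctr δ) := by
    intro z hz
    rw [dist_eh_ctr]
    apply Real.lt_sqrt_of_sq_lt
    nlinarith [sq_nonneg z.1]
  -- the ball around a point on S
  have hnear : ∀ s : ℝ, |s| ≤ c₁ → Metric.ball (eh δ (s, 0)) μ ⊆ Ω ∧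
      √(s ^ 2 + (1 + δ) ^ 2) ≤ 1 + μ := by
    intro s hs
    have hmem : eh δ (s, 0) ∈ Sseg c₁ δ := by
      refine ⟨by rw [eh_zero]; exact hs, by rw [eh_one]; ring⟩
    rcases hS hmem with h | h
    · have := near hΩo hμ0 (subset_union_left.trans hB) h.2.1
      rw [dist_zero_right, norm_eh] at this
      refine ⟨this.1, le_trans (le_of_eq ?_) this.2⟩
      congr 2; ring
    · have := near hΩo hμ0 (subset_union_right.trans hB) h.2.1
      rw [dist_eh_ctr] at this
      refine ⟨this.1, le_trans (le_of_eq ?_) this.2⟩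
      congr 2; ring
  obtain ⟨hball, hsq⟩ := hnear t ht
  have hsq2 : t ^ 2 + (1 + δ) ^ 2 ≤ (1 + μ) ^ 2 := (Real.sqrt_le_left (by linarith)).1 hsq
  have hδμ : δ ≤ μ := by nlinarith [sq_nonneg t]
  have ht2 : |t| ≤ 2 := by
    apply abs_le_of_sq_le_sq _ (by norm_num)
    nlinarith
  have hbox : Icc (t - 7 * μ / 10, -(7 * μ / 10)) (t + 7 * μ / 10, 7 * μ / 10) ⊆ eh δ ⁻¹' Ω := by
    rintro ⟨x, y⟩ ⟨⟨h1, h2⟩, h3, h4⟩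
    simp only at h1 h2 h3 h4
    apply hball
    rw [Metric.mem_ball, dist_eh, Real.sqrt_lt' hμ0]
    try simp only
    have q1 : (x - t) ^ 2 ≤ (7 * μ / 10) ^ 2 := sq_le_sq' (by linarith) (by linarith)
    have q2 : (y - 0) ^ 2 ≤ (7 * μ / 10) ^ 2 := sq_le_sq' (by linarith) (by linarith)
    nlinarith
  have hUo : IsOpen (eh δ ⁻¹' Ω) := hΩo.preimage (eh δ).continuous
  have sa := sm_eh δ ha
  have hsol : Sol (eh δ ⁻¹' Ω) (fun z => aε (eh δ z)) (fun z => uε (eh δ z)) Λ := by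
    refine ⟨hUo, sa, sm_eh δ hu, ?_, ?_, ?_, hΛ1⟩
    · intro z hz
      simp only [dX_eh, dY_eh]
      exact hpde _ hz
    · intro z hz
      have h1 := (hab _ hz).1
      have h2 : 1 / min 1 (min κp κm) ≤ Λ := le_max_right _ _
      have h3 : 1 / min 1 (min κp κm) * min 1 (min κp κm) = 1 := by field_simp
      calc (1 : ℝ) = 1 / min 1 (min κp κm) * min 1 (min κp κm) := h3.symm
        _ ≤ Λ * aε (eh δ z) := by gcongr
    · intro z hz
      exact (hab _ hz).2.trans (le_max_left _ _)
  have hu1 : ∀ z ∈ eh δ ⁻¹' Ω, |uε (eh δ z)| ≤ 1 := by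
    have hcl : closure (eh δ ⁻¹' Ω) = eh δ ⁻¹' closure Ω := ((eh δ).preimage_closure Ω).symm
    apply maxp_abs hsol
    · rw [hcl]
      exact (eh δ).isCompact_preimage.2 hΩb.isCompact_closure
    · rw [hcl]
      exact huc.comp (eh δ).continuous.continuousOn (fun _ hz => hz)
    · intro z hz
      rw [← (eh δ).preimage_frontier] at hz
      try simp only
      rw [huφ hz]
      exact hφ _ hz
  refine ⟨hδμ, hsol, by linarith, by linarith, by linarith, ht2, by linarith, by linarith,
    hbox, fun z hz => hu1 z (hbox hz), ?_, ?_, ?_⟩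
  · intro z hz hy
    have h1 := hplus z (abs_lt.1 hy).2
    have h2 := hminus z (abs_lt.1 hy).1
    try simp only
    rw [haF _ hz (le_trans (by linarith) (le_abs_self _)) (le_trans (by linarith) (le_abs_self _))]
    have n1 : eh δ z ∉ Bp := by
      intro h; have := mem_ball_zero_iff.1 h; linarith
    have n2 : eh δ z ∉ Bm δ := by
      intro h; have := Metric.mem_ball.1 h; linarith
    rw [aFun, if_neg n1, if_neg n2]
  · intro z hz hy
    obtain ⟨g, hg⟩ := hgp
    have o1 : IsOpen ((eh δ ⁻¹' Ω) ∩ {z : ℝ × ℝ | -(δ - ε) < z.2}) :=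
      hUo.inter (isOpen_lt (by fun_prop) (by fun_prop))
    refine radial o1 (sa.mono inter_subset_left)
      (G := fun s => if |√s - 1| < ε then g √s else if √s < 1 then κp else 1) ?_ ⟨hz, hy⟩
    rintro w ⟨hw, hwy⟩
    have h2 := hminus w hwy
    try simp only
    rw [← norm_eh]
    by_cases hc : |‖eh δ w‖ - 1| < ε
    · rw [if_pos hc, hg _ hw hc]
    · rw [if_neg hc, haF _ hw (not_lt.1 hc) (le_trans (by linarith) (le_abs_self _))]
      have n2 : eh δ w ∉ Bm δ := by
        intro h; have := Metric.mem_ball.1 h; linarith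
      have n1 : eh δ w ∈ Bp ↔ ‖eh δ w‖ < 1 := mem_ball_zero_iff
      rw [aFun, if_neg n2]
      simp only [n1]
  · intro z hz hy
    obtain ⟨g, hg⟩ := hgm
    have o1 : IsOpen ((eh δ ⁻¹' Ω) ∩ {z : ℝ × ℝ | z.2 < δ - ε}) :=
      hUo.inter (isOpen_lt (by fun_prop) (by fun_prop))
    have := radial (c := -(1 + δ)) o1 (sa.mono inter_subset_left)
      (G := fun s => if |√s - 1| < ε then g √s else if √s < 1 then κm else 1) ?_ ⟨hz, hy⟩
    · rw [sub_neg_eq_add] at this; exact this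
    rintro w ⟨hw, hwy⟩
    have h2 := hplus w hwy
    try simp only
    rw [sub_neg_eq_add, ← dist_eh_ctr]
    by_cases hc : |dist (eh δ w) (ctr δ) - 1| < ε
    · rw [if_pos hc, hg _ hw hc]
    · rw [if_neg hc, haF _ hw (le_trans (by linarith) (le_abs_self _)) (not_lt.1 hc)]
      have n2 : eh δ w ∉ Bp := by
        intro h; have := mem_ball_zero_iff.1 h; linarith
      have n1 : eh δ w ∈ Bm δ ↔ dist (eh δ w) (ctr δ) < 1 := Metric.mem_ball
      rw [aFun, if_neg n2]
      simp only [n1]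

lemma norm_fderiv_le (F : E2 → ℝ) (x : E2) : ‖fderiv ℝ F x‖ ≤ |pd 0 F x| + |pd 1 F x| := by
  apply ContinuousLinearMap.opNorm_le_bound _ (by positivity)
  intro v
  have e : v = v 0 • EuclideanSpace.single 0 (1 : ℝ) + v 1 • EuclideanSpace.single 1 (1 : ℝ) := by
    ext i; fin_cases i <;> simp
  have e2 : fderiv ℝ F x v = v 0 * pd 0 F x + v 1 * pd 1 F x := by
    conv_lhs => rw [e]
    rw [map_add, map_smul, map_smul]; rfl
  rw [e2, Real.norm_eq_abs]
  have h0 : |v 0| ≤ ‖v‖ := by simpa using PiLp.norm_apply_le v 0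
  have h1 : |v 1| ≤ ‖v‖ := by simpa using PiLp.norm_apply_le v 1
  calc |v 0 * pd 0 F x + v 1 * pd 1 F x| ≤ |v 0| * |pd 0 F x| + |v 1| * |pd 1 F x| := by
        rw [← abs_mul, ← abs_mul]; exact abs_add_le _ _
    _ ≤ ‖v‖ * |pd 0 F x| + ‖v‖ * |pd 1 F x| := by gcongr
    _ = _ := by ring

end Neck

/-- Section 4, bound on the thin rectangle `E`: if `‖φ‖_{L^∞(∂Ω)} ≤ 1`, there is a
constant `C` depending only on `Ω, μ, δ₀, κ⁺, κ⁻` such that `sup_E |∇u_ε| ≤ C`. -/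
theorem stmt8 (Ω : Set (EuclideanSpace ℝ (Fin 2)))
    (hΩo : IsOpen Ω) (hΩb : Bornology.IsBounded Ω) (hΩs : SmoothBoundary Ω)
    (μ δ₀ κp κm : ℝ) (hμ : μ ∈ Ioo (0:ℝ) 1) (hδ₀ : 0 < δ₀)
    (hκp : 0 < κp) (hκm : 0 < κm) :
    ∃ C > 0, ∀ δ ∈ Ioo 0 δ₀, ∀ ε ∈ Ioo 0 (δ / 2),
      closure Bp ∪ closure (Bm δ) ⊆ innerReg Ω (2 * μ) →
      -- `c₁` is the largest constant with `S ⊆ W⁺ ∪ W⁻`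
      ∀ c₁ : ℝ, 0 < c₁ → Sseg c₁ δ ⊆ Wp Ω δ μ ∪ Wm Ω δ μ →
        (∀ c : ℝ, Sseg c δ ⊆ Wp Ω δ μ ∪ Wm Ω δ μ → c ≤ c₁) →
      ∀ φ : EuclideanSpace ℝ (Fin 2) → ℝ, ContDiff ℝ (⊤ : ℕ∞) φ →
        (∀ y ∈ frontier Ω, |φ y| ≤ 1) →
      ∀ aε : EuclideanSpace ℝ (Fin 2) → ℝ,
        ContDiffOn ℝ (⊤ : ℕ∞) aε Ω →
        (∀ x ∈ Ω, min 1 (min κp κm) ≤ aε x ∧ aε x ≤ max 1 (max κp κm)) →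
        -- `aε = a` outside the `ε`-neighborhoods of `∂B⁺` and `∂B⁻`
        (∀ x ∈ Ω, ε ≤ |‖x‖ - 1| → ε ≤ |dist x (ctr δ) - 1| → aε x = aFun δ κp κm x) →
        -- near `∂B⁺`, `aε` is radial, nonincreasing if `κ⁺ > 1`, nondecreasing if `κ⁺ < 1`
        (∃ g : ℝ → ℝ, (1 < κp → Antitone g) ∧ (κp < 1 → Monotone g) ∧
          ∀ x ∈ Ω, |‖x‖ - 1| < ε → aε x = g ‖x‖) →
        -- similarly near `∂B⁻`
        (∃ g : ℝ → ℝ, (1 < κm → Antitone g) ∧ (κm < 1 → Monotone g) ∧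
          ∀ x ∈ Ω, |dist x (ctr δ) - 1| < ε → aε x = g (dist x (ctr δ))) →
      ∀ uε : EuclideanSpace ℝ (Fin 2) → ℝ,
        ContDiffOn ℝ (⊤ : ℕ∞) uε Ω →
        ContinuousOn uε (closure Ω) →
        EqOn uε φ (frontier Ω) →
        (∀ x ∈ Ω, aε x * (pd 0 (pd 0 uε) x + pd 1 (pd 1 uε) x)
          + (pd 0 aε x * pd 0 uε x + pd 1 aε x * pd 1 uε x) = 0) →
        ∀ x ∈ Eset c₁ δ, ‖fderiv ℝ uε x‖ ≤ C := by
  set Λ := max (max 1 (max κp κm)) (1 / min 1 (min κp κm)) with hΛdef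
  have hμ0 := hμ.1
  set c0 : ℝ := (μ ^ 4 / 10) ^ 6 with hc0
  have hc0pos : 0 < c0 := by positivity
  refine ⟨|Neck.K3 Λ / c0| + 2, by positivity, ?_⟩
  intro δ hδ ε hε hB c₁ hc₁ hS _ φ _ hφ aε ha hab haF hgp hgm uε hu huc huφ hpde x hx
  obtain ⟨gp, -, -, hgp⟩ := hgp
  obtain ⟨gm, -, -, hgm⟩ := hgm
  obtain ⟨hδμ, hF⟩ := Neck.mkFull hΩo hΩb hμ hκp hκm hδ.1 hε hB hS hx.1 hφ ha hab haF ⟨gp, hgp⟩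
    ⟨gm, hgm⟩ hu huc huφ hpde
  obtain ⟨hx1, hx2⟩ := hx
  have hb := hF.bound (y₀ := x 1 + 1 + δ) (by linarith) (by linarith [hε.2]) (by linarith [hδ.1])
  have hex : Neck.eh δ (x 0, x 1 + 1 + δ) = x := by
    ext i
    fin_cases i
    · exact Neck.eh_zero δ _
    · refine (Neck.eh_one δ _).trans ?_
      show x 1 + 1 + δ - 1 - δ = x 1
      ring
  rw [Neck.dX_eh, Neck.dY_eh] at hb
  simp only [hex] at hb
  have hz : μ ^ 4 / 10 ≤ Neck.zt (x 0) (7 * μ / 10) (x 0, x 1 + 1 + δ) := by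
    unfold Neck.zt
    simp only
    have q : (x 1 + 1 + δ) ^ 2 ≤ (μ / 2) ^ 2 := by
      rw [← sq_abs]
      gcongr
      linarith
    have q2 : 24 / 100 * μ ^ 2 ≤ (7 * μ / 10) ^ 2 - (x 1 + 1 + δ) ^ 2 := by linarith
    have q3 := mul_le_mul_of_nonneg_left q2 (show 0 ≤ (7 * μ / 10) ^ 2 by positivity)
    have q4 : 0 ≤ μ ^ 4 := by positivity
    rw [sub_self]
    linarith
  have hz6 : c0 ≤ Neck.zt (x 0) (7 * μ / 10) (x 0, x 1 + 1 + δ) ^ 6 := by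
    rw [hc0]; gcongr
  have hp : pd 0 uε x ^ 2 + pd 1 uε x ^ 2 ≤ Neck.K3 Λ / c0 := by
    rw [le_div_iff₀ hc0pos]
    calc (pd 0 uε x ^ 2 + pd 1 uε x ^ 2) * c0 ≤ (pd 0 uε x ^ 2 + pd 1 uε x ^ 2) *
        Neck.zt (x 0) (7 * μ / 10) (x 0, x 1 + 1 + δ) ^ 6 := by gcongr
      _ ≤ _ := by rw [mul_comm]; exact hb
  refine (Neck.norm_fderiv_le uε x).trans ?_
  have k := le_abs_self (Neck.K3 Λ / c0)
  have k0 : |pd 0 uε x| ≤ pd 0 uε x ^ 2 + 1 := by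
    rw [← sq_abs]; nlinarith [sq_nonneg (|pd 0 uε x| - 1), sq_nonneg (|pd 0 uε x|)]
  have k1 : |pd 1 uε x| ≤ pd 1 uε x ^ 2 + 1 := by
    rw [← sq_abs]; nlinarith [sq_nonneg (|pd 1 uε x| - 1), sq_nonneg (|pd 1 uε x|)]
  linarith
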